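/- Let K be a Hopf subalgebra of H, let G be a subgroup of the group G(H) of grouplike elements of H, and let M be a finite-dimensional left K-module. Then there is a canonical isomorphism of kG-modules H ⊗_K M ≅ ⊕_{C ∈ kG\H/K} (kG ⊗_{kG_C} {}^C M), where G_C is the subgroup of G determined by kG ∩ {}^C K = kG_C; equivalently G_C = {g ∈ G | gCK = CK}. In particular (kG, K) is a Mackey pair of Hopf subalgebras of H. -/

import Mathlib

open TensorProduct

namespace MackeyPaper

noncomputable section

universe v

variable (k : Type) [Field k] [CharZero k] [IsAlgClosed k]
variable (H : Type) [Ring H] [HopfAlgebra k H]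

/-- A subcoalgebra of `H`: a `k`-subspace `C` with `Δ(C) ⊆ C ⊗ C`. -/
def IsSubcoalgebra (C : Submodule k H) : Prop :=
  ∀ c ∈ C, Coalgebra.comul (R := k) c ∈
    LinearMap.range (TensorProduct.map C.subtype C.subtype)

/-- A simple (nonzero, minimal) subcoalgebra of `H`. -/
def IsSimpleSubcoalgebra (C : Submodule k H) : Prop :=
  IsSubcoalgebra k H C ∧ C ≠ ⊥ ∧
    ∀ D : Submodule k H, D ≤ C → IsSubcoalgebra k H D → D ≠ ⊥ → D = C

/-- A Hopf subalgebra of `H`: a subalgebra which is a subcoalgebra and is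
stable under the antipode. -/
def IsHopfSubalgebra (K : Subalgebra k H) : Prop :=
  IsSubcoalgebra k H K.toSubmodule ∧ ∀ x ∈ K, HopfAlgebra.antipode (R := k) x ∈ K

/-- `Λ` is the (two-sided) idempotent integral of the Hopf subalgebra `K`,
i.e. the integral normalized by `ε(Λ) = 1`. -/
def IsIdempotentIntegral (K : Subalgebra k H) (Λ : H) : Prop :=
  Λ ∈ K ∧ Coalgebra.counit (R := k) Λ = 1 ∧
    ∀ x ∈ K, x * Λ = Coalgebra.counit (R := k) x • Λ ∧
      Λ * x = Coalgebra.counit (R := k) x • Λ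

/-- A cocommutative element of `H`; the cocommutative elements of `H` form
the character ring `C(H^*)`. -/
def IsCocomm (x : H) : Prop :=
  (TensorProduct.comm k H H) (Coalgebra.comul (R := k) x) = Coalgebra.comul (R := k) x

/-- The character ring `C(H^*)`, i.e. the space of cocommutative elements of `H`,
as a `k`-subspace of `H`. -/
def charRing : Submodule k H :=
  LinearMap.ker ((TensorProduct.comm k H H).toLinearMap ∘ₗ Coalgebra.comul (R := k)
      - Coalgebra.comul (R := k))

/-- `d` is the irreducible character (of `H^*`) associated to the simple
subcoalgebra `C`: the unique cocommutative element of `C` whose counit is the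
positive square root of `dim_k C`. -/
def IsCharacterOf (d : H) (C : Submodule k H) : Prop :=
  d ∈ C ∧ IsCocomm k H d ∧
    Coalgebra.counit (R := k) d = ((Nat.sqrt (Module.finrank k ↥C) : ℕ) : k)

/-- The right coset `CK` of a subcoalgebra `C`, i.e. the subspace `C·K`. -/
def CKsub (K : Subalgebra k H) (C : Submodule k H) : Submodule k H :=
  C * K.toSubmodule

/-- The conjugate Hopf subalgebra `ᶜK` of `K` by a simple subcoalgebra `C`
(with associated irreducible character `c`): the span of all simple
subcoalgebras of `H` whose irreducible character `d` satisfies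
`d·c·Λ_K = ε(d)·c·Λ_K`.  (The condition is stated for all cocommutative
elements of `C` resp. `D`; this is equivalent, since the cocommutative
elements of a simple subcoalgebra are exactly the scalar multiples of its
irreducible character.) -/
def conjK (K : Subalgebra k H) (Λ : H) (C : Submodule k H) : Submodule k H :=
  sSup {D : Submodule k H | IsSimpleSubcoalgebra k H D ∧
    ∀ d ∈ D, IsCocomm k H d → ∀ c ∈ C, IsCocomm k H c →
      d * (c * Λ) = Coalgebra.counit (R := k) d • (c * Λ)}

/-- A complete irredundant system of representatives (by simple subcoalgebras)
of the double cosets `L\H/K`.  (Taking `L = ⊥` gives a system of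
representatives of the right cosets `H/K`.) -/
def IsDoubleCosetReps (L K : Subalgebra k H) {ι : Type} (rep : ι → Submodule k H) : Prop :=
  (∀ i, IsSimpleSubcoalgebra k H (rep i)) ∧
  (∀ i j, L.toSubmodule * rep i * K.toSubmodule = L.toSubmodule * rep j * K.toSubmodule
      → i = j) ∧
  (∀ C : Submodule k H, IsSimpleSubcoalgebra k H C →
      ∃ i, C ≤ L.toSubmodule * rep i * K.toSubmodule)

section Ind

variable (K : Subalgebra k H) (M : Type v) [AddCommGroup M] [Module k M]
  [Module ↥K M] [IsScalarTower k ↥K M]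

/-- The relations defining the induced module `H ⊗_K M` as a quotient of
`H ⊗_k M`: the `H`-submodule generated by the elements `a ⊗ m - 1 ⊗ a·m`
for `a ∈ K` (equivalently, spanned by all `h·a ⊗ m - h ⊗ a·m`). -/
def indRel : Submodule H (H ⊗[k] M) :=
  Submodule.span H {z | ∃ (a : ↥K) (m : M),
    z = (a : H) ⊗ₜ[k] m - (1 : H) ⊗ₜ[k] (a • m)}

/-- The induced module `M↑_K^H = H ⊗_K M`, a left `H`-module. -/
abbrev Ind := (H ⊗[k] M) ⧸ indRel k H K M

variable (C : Submodule k H)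

/-- The underlying space `CK ⊗_k M` of which the conjugate module `ᶜM` is a
quotient. -/
def CKM : Type _ := ↥(CKsub k H K C) ⊗[k] M

instance : AddCommGroup (CKM k H K M C) :=
  inferInstanceAs (AddCommGroup (↥(CKsub k H K C) ⊗[k] M))

instance : Module k (CKM k H K M C) :=
  inferInstanceAs (Module k (↥(CKsub k H K C) ⊗[k] M))

/-- The pure tensor `x ⊗ m` as an element of `CK ⊗_k M`. -/
def ckmk (x : ↥(CKsub k H K C)) (m : M) : CKM k H K M C := x ⊗ₜ[k] m

/-- The relations defining the conjugate module `ᶜM = CK ⊗_K M` as a quotient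
of `CK ⊗_k M`: `x·a ⊗ m - x ⊗ a·m` for `a ∈ K`. -/
def conjRel : Submodule k (CKM k H K M C) :=
  Submodule.span k {z | ∃ (x : ↥(CKsub k H K C)) (a : ↥K) (m : M)
    (hxa : (x : H) * (a : H) ∈ CKsub k H K C),
    z = ckmk k H K M C ⟨(x : H) * (a : H), hxa⟩ m - ckmk k H K M C x (a • m)}

/-- The conjugate module `ᶜM := CK ⊗_K M`. -/
abbrev ConjM := CKM k H K M C ⧸ conjRel k H K M C

/-- The canonical copy of the conjugate module `ᶜM = CK ⊗_K M` inside
`H ⊗_K M` (the image of `CK ⊗_K M` under multiplication; this is indeed a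
copy of `ᶜM` since `H` is a free right `K`-module and `CK` is one of the
coset summands). -/
def conjMsub : Submodule k (Ind k H K M) :=
  Submodule.span k {z | ∃ (x : H) (_ : x ∈ CKsub k H K C) (m : M),
    z = Submodule.Quotient.mk (x ⊗ₜ[k] m)}

end Ind

section Comp

variable (L K : Subalgebra k H) (Λ : H) (C : Submodule k H)
variable (M : Type v) [AddCommGroup M] [Module k M] [Module ↥K M] [IsScalarTower k ↥K M]

/-- The underlying space `L ⊗_k (CK ⊗_k M)`. -/
def LCM : Type _ := ↥L ⊗[k] CKM k H K M C

instance : AddCommGroup (LCM k H L K C M) :=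
  inferInstanceAs (AddCommGroup (↥L ⊗[k] CKM k H K M C))

instance : Module k (LCM k H L K C M) :=
  inferInstanceAs (Module k (↥L ⊗[k] CKM k H K M C))

/-- The pure tensor `l ⊗ w` as an element of `L ⊗_k (CK ⊗_k M)`. -/
def lcmk (l : ↥L) (w : CKM k H K M C) : LCM k H L K C M := l ⊗ₜ[k] w

/-- The relations defining `L ⊗_{L ∩ ᶜK} ᶜM` as a quotient of
`L ⊗_k (CK ⊗_k M)`: the balancedness relations over `L ∩ ᶜK` (first set),
together with (the image of) the relations defining `ᶜM = CK ⊗_K M`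
(second set). -/
def compRel : Submodule k (LCM k H L K C M) :=
  Submodule.span k
    ({z | ∃ (l : ↥L) (a : H) (haL : a ∈ L) (_ : a ∈ conjK k H K Λ C)
        (x : ↥(CKsub k H K C)) (m : M) (hax : a * (x : H) ∈ CKsub k H K C),
        z = lcmk k H L K C M ⟨(l : H) * a, mul_mem l.2 haL⟩ (ckmk k H K M C x m)
          - lcmk k H L K C M l (ckmk k H K M C ⟨a * (x : H), hax⟩ m)} ∪
     {z | ∃ (l : ↥L) (x : ↥(CKsub k H K C)) (a : ↥K) (m : M)
        (hxa : (x : H) * (a : H) ∈ CKsub k H K C),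
        z = lcmk k H L K C M l (ckmk k H K M C ⟨(x : H) * (a : H), hxa⟩ m)
          - lcmk k H L K C M l (ckmk k H K M C x (a • m))})

/-- The module `L ⊗_{L ∩ ᶜK} ᶜM` (a left `L`-module via multiplication on the
first tensor factor). -/
abbrev Comp := LCM k H L K C M ⧸ compRel k H L K Λ C M

end Comp

open DirectSum

section Mackey

variable (L K : Subalgebra k H) (Λ : H)

/-- The Mackey isomorphism property for the pair `(L, K)` at the `K`-module
`M`: for any system of double coset representatives, the left-multiplication
map `⊕_C L ⊗_{L ∩ ᶜK} ᶜM → M↑_K^H↓_L^H`, `l ⊗ v ↦ l·v`, is an isomorphism of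
`L`-modules.  (A `k`-linear map satisfying the displayed formula on the
spanning elements is automatically `L`-equivariant for the evident
`L`-actions, so this property is stated for `k`-linear maps.) -/
def MackeyAt (M : Type v) [AddCommGroup M] [Module k M] [Module ↥K M]
    [IsScalarTower k ↥K M] [Module.Finite k M] : Prop :=
  ∀ (ι : Type) [DecidableEq ι] (rep : ι → Submodule k H),
    IsDoubleCosetReps k H L K rep →
    ∃ π : (⨁ i : ι, Comp k H L K Λ (rep i) M) →ₗ[k] Ind k H K M,
      Function.Bijective π ∧
      ∀ (i : ι) (l : ↥L) (x : ↥(CKsub k H K (rep i))) (m : M),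
        π (DirectSum.of (fun i => Comp k H L K Λ (rep i) M) i
            (Submodule.Quotient.mk (lcmk k H L K (rep i) M l (ckmk k H K M (rep i) x m)))) =
          Submodule.Quotient.mk (((l : H) * (x : H)) ⊗ₜ[k] m)

/-- `(L, K)` is a Mackey pair of Hopf subalgebras of `H` (here `Λ` is the
idempotent integral of `K`): for every finite-dimensional `K`-module `M` the
left-multiplication homomorphism `π_M` is an isomorphism. -/
def IsMackeyPair : Prop :=
  ∀ (M : Type v) [AddCommGroup M] [Module k M] [Module ↥K M]
    [IsScalarTower k ↥K M] [Module.Finite k M], MackeyAt k H L K Λ M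

end Mackey


section Statements

variable [FiniteDimensional k H] [IsSemisimpleRing H]

/-- `G` is a subgroup of the group `G(H)` of grouplike elements of `H`. -/
def IsGrouplikeSubgroup (G : Set H) : Prop :=
  (1 : H) ∈ G ∧
  (∀ g ∈ G, g ≠ 0 ∧ Coalgebra.comul (R := k) g = g ⊗ₜ[k] g) ∧
  (∀ g ∈ G, ∀ g' ∈ G, g * g' ∈ G) ∧
  (∀ g ∈ G, ∃ g' ∈ G, g * g' = 1 ∧ g' * g = 1)

section Sweedler

open Coalgebra HopfAlgebra WithConv

variable {R : Type*} [Field R] {A : Type*} [Ring A] [HopfAlgebra R A]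

/-- The contraction `a ⊗ b ↦ f(a) b`. -/
def contractL (f : A →ₗ[R] R) : A ⊗[R] A →ₗ[R] A :=
  (TensorProduct.lid R A).toLinearMap ∘ₗ f.rTensor A

/-- The contraction `a ⊗ b ↦ f(b) a`. -/
def contractR (f : A →ₗ[R] R) : A ⊗[R] A →ₗ[R] A :=
  (TensorProduct.rid R A).toLinearMap ∘ₗ f.lTensor A

@[simp] lemma contractL_tmul (f : A →ₗ[R] R) (a b : A) :
    contractL f (a ⊗ₜ[R] b) = f a • b := by
  simp [contractL]

@[simp] lemma contractR_tmul (f : A →ₗ[R] R) (a b : A) :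
    contractR f (a ⊗ₜ[R] b) = f b • a := by
  simp [contractR]

lemma contractL_mul_one_tmul (f : A →ₗ[R] R) (t : A ⊗[R] A) (a : A) :
    contractL f (t * (1 ⊗ₜ a)) = contractL f t * a := by
  induction t with
  | zero => simp
  | tmul x y => simp
  | add x y hx hy => simp [add_mul, hx, hy]

lemma contractL_one_tmul_mul (f : A →ₗ[R] R) (t : A ⊗[R] A) (a : A) :
    contractL f ((1 ⊗ₜ a) * t) = a * contractL f t := by
  induction t with
  | zero => simp
  | tmul x y => simp
  | add x y hx hy => simp [mul_add, hx, hy]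

lemma contractL_mul_tmul_one (f : A →ₗ[R] R) (t : A ⊗[R] A) (a : A) :
    contractL f (t * (a ⊗ₜ 1)) = contractL (f ∘ₗ LinearMap.mulRight R a) t := by
  induction t with
  | zero => simp
  | tmul x y => simp
  | add x y hx hy => simp [add_mul, hx, hy]

lemma contractL_tmul_one_mul (f : A →ₗ[R] R) (t : A ⊗[R] A) (a : A) :
    contractL f ((a ⊗ₜ 1) * t) = contractL (f ∘ₗ LinearMap.mulLeft R a) t := by
  induction t with
  | zero => simp
  | tmul x y => simp
  | add x y hx hy => simp [mul_add, hx, hy]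

lemma contractR_mul_one_tmul (f : A →ₗ[R] R) (t : A ⊗[R] A) (a : A) :
    contractR f (t * (1 ⊗ₜ a)) = contractR (f ∘ₗ LinearMap.mulRight R a) t := by
  induction t with
  | zero => simp
  | tmul x y => simp
  | add x y hx hy => simp [add_mul, hx, hy]

lemma contractR_one_tmul_mul (f : A →ₗ[R] R) (t : A ⊗[R] A) (a : A) :
    contractR f ((1 ⊗ₜ a) * t) = contractR (f ∘ₗ LinearMap.mulLeft R a) t := by
  induction t with
  | zero => simp
  | tmul x y => simp
  | add x y hx hy => simp [mul_add, hx, hy]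

lemma contractR_mul_tmul_one (f : A →ₗ[R] R) (t : A ⊗[R] A) (a : A) :
    contractR f (t * (a ⊗ₜ 1)) = contractR f t * a := by
  induction t with
  | zero => simp
  | tmul x y => simp
  | add x y hx hy => simp [add_mul, hx, hy]

lemma contractR_tmul_one_mul (f : A →ₗ[R] R) (t : A ⊗[R] A) (a : A) :
    contractR f ((a ⊗ₜ 1) * t) = a * contractR f t := by
  induction t with
  | zero => simp
  | tmul x y => simp
  | add x y hx hy => simp [mul_add, hx, hy]

lemma apply_contractL (f g : A →ₗ[R] R) (t : A ⊗[R] A) :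
    g (contractL f t) = f (contractR g t) := by
  induction t with
  | zero => simp
  | tmul x y => simp [mul_comm]
  | add x y hx hy => simp [hx, hy]

@[simp] lemma contractL_counit_comul (x : A) :
    contractL (counit (R := R)) (comul (R := R) x) = x := by
  simp [contractL]

@[simp] lemma contractR_counit_comul (x : A) :
    contractR (counit (R := R)) (comul (R := R) x) = x := by
  simp [contractR]

lemma contractR_comm (f : A →ₗ[R] R) (t : A ⊗[R] A) :
    contractR f (TensorProduct.comm R A A t) = contractL f t := by
  induction t with
  | zero => simp
  | tmul x y => simp
  | add x y hx hy => simp [hx, hy]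

/-- A tensor is recovered from its contractions against the dual of a finite basis. -/
lemma sum_tmul_contractL [FiniteDimensional R A] {ι : Type*} [Fintype ι] (b : Module.Basis ι R A)
    (t : A ⊗[R] A) : ∑ i, b i ⊗ₜ[R] contractL (b.coord i) t = t := by
  induction t with
  | zero => simp
  | tmul x y =>
    conv_rhs => rw [← b.sum_repr x, TensorProduct.sum_tmul]
    simp [TensorProduct.smul_tmul]
  | add x y hx hy =>
    simp only [map_add, TensorProduct.tmul_add, Finset.sum_add_distrib, hx, hy]

lemma eq_of_contractL_eq [FiniteDimensional R A] {t s : A ⊗[R] A}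
    (h : ∀ f : A →ₗ[R] R, contractL f t = contractL f s) : t = s := by
  rw [← sum_tmul_contractL (Module.finBasis R A) t, ← sum_tmul_contractL (Module.finBasis R A) s]
  simp [h]

lemma eq_of_forall_dual_eq {x y : A} (h : ∀ f : A →ₗ[R] R, f x = f y) : x = y := by
  rw [← sub_eq_zero, ← Module.forall_dual_apply_eq_zero_iff R]
  intro f
  simp [h]

/-- Coassociativity in terms of contractions. -/
lemma contractL_contractR_comul (f g : A →ₗ[R] R) (x : A) :
    contractL f (comul (R := R) (contractR g (comul (R := R) x))) =
      contractR g (comul (R := R) (contractL f (comul (R := R) x))) := by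
  have h := coassoc_apply (R := R) x
  have h1 : ∀ t : A ⊗[R] A, contractL f (comul (R := R) (contractR g t)) =
      (TensorProduct.lid R A ∘ₗ (TensorProduct.map f
        ((TensorProduct.rid R A).toLinearMap ∘ₗ g.lTensor A)))
        (TensorProduct.assoc R A A A (comul.rTensor A t)) := by
    intro t
    induction t with
    | zero => simp
    | add x y hx hy => simp only [map_add, hx, hy]
    | tmul x y =>
      simp only [contractR_tmul, map_smul, LinearMap.rTensor_tmul]
      induction comul (R := R) x with
      | zero => simp
      | add x y hx hy => simp only [map_add, TensorProduct.add_tmul, smul_add, hx, hy]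
      | tmul a b => simp [smul_smul, mul_comm]
  have h2 : ∀ t : A ⊗[R] A, contractR g (comul (R := R) (contractL f t)) =
      (TensorProduct.lid R A ∘ₗ (TensorProduct.map f
        ((TensorProduct.rid R A).toLinearMap ∘ₗ g.lTensor A))) (comul.lTensor A t) := by
    intro t
    induction t with
    | zero => simp
    | add x y hx hy => simp only [map_add, hx, hy]
    | tmul x y =>
      simp only [contractL_tmul, map_smul, LinearMap.lTensor_tmul]
      induction comul (R := R) y with
      | zero => simp
      | add x y hx hy => simp only [map_add, TensorProduct.tmul_add, smul_add, hx, hy]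
      | tmul a b => simp [smul_smul, mul_comm]
  rw [h1, h2, h]

variable (R A) in
abbrev inlConv : WithConv (A →ₗ[R] A ⊗[R] A) :=
  toConv (Algebra.TensorProduct.includeLeft (R := R) (S := R) (A := A) (B := A)).toLinearMap

variable (R A) in
abbrev inrConv : WithConv (A →ₗ[R] A ⊗[R] A) :=
  toConv (Algebra.TensorProduct.includeRight (R := R) (A := A) (B := A)).toLinearMap

lemma conv_comp_antipode {B : Type*} [Ring B] [Algebra R B] (φ : A →ₐ[R] B) :
    toConv φ.toLinearMap * toConv (φ.toLinearMap ∘ₗ antipode R) = 1 := by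
  ext x
  simp [(ℛ R x).convMul_apply, ← map_mul, ← map_sum,
    sum_mul_antipode_eq_algebraMap_counit (ℛ R x)]

lemma conv_antipode_comp {B : Type*} [Ring B] [Algebra R B] (φ : A →ₐ[R] B) :
    toConv (φ.toLinearMap ∘ₗ antipode R) * toConv φ.toLinearMap = 1 := by
  ext x
  simp [(ℛ R x).convMul_apply, ← map_mul, ← map_sum,
    sum_antipode_mul_eq_algebraMap_counit (ℛ R x)]

lemma comul_eq_conv :
    toConv (Bialgebra.comulAlgHom R A).toLinearMap = inlConv R A * inrConv R A := by
  ext x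
  simp [(ℛ R x).convMul_apply, (ℛ R x).eq]

lemma sum_comul_mul_one_tmul_antipode {ι : Type*} {h : A} (𝓡 : Repr R h ι) :
    ∑ i ∈ 𝓡.index, comul (R := R) (𝓡.left i) * (1 ⊗ₜ antipode R (𝓡.right i)) = h ⊗ₜ[R] 1 := by
  have key : toConv (Bialgebra.comulAlgHom R A).toLinearMap *
      toConv ((inrConv R A).ofConv ∘ₗ antipode R) = inlConv R A := by
    rw [comul_eq_conv, mul_assoc, conv_comp_antipode, mul_one]
  simpa [𝓡.convMul_apply] using congr($key h)

lemma sum_antipode_tmul_one_mul_comul {ι : Type*} {h : A} (𝓡 : Repr R h ι) :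
    ∑ i ∈ 𝓡.index, (antipode R (𝓡.left i) ⊗ₜ[R] 1) * comul (R := R) (𝓡.right i) = 1 ⊗ₜ h := by
  have key : toConv ((inlConv R A).ofConv ∘ₗ antipode R) *
      toConv (Bialgebra.comulAlgHom R A).toLinearMap = inrConv R A := by
    rw [comul_eq_conv, ← mul_assoc, conv_antipode_comp, one_mul]
  simpa [𝓡.convMul_apply] using congr($key h)

lemma sum_comul_antipode_mul_tmul_one {ι : Type*} {h : A} (𝓡 : Repr R h ι) :
    ∑ i ∈ 𝓡.index, comul (R := R) (antipode R (𝓡.left i)) * (𝓡.right i ⊗ₜ 1) =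
      1 ⊗ₜ[R] antipode R h := by
  have key : toConv ((Bialgebra.comulAlgHom R A).toLinearMap ∘ₗ antipode R) * inlConv R A =
      toConv ((inrConv R A).ofConv ∘ₗ antipode R) := by
    have h1 : inlConv R A = toConv (Bialgebra.comulAlgHom R A).toLinearMap *
        toConv ((inrConv R A).ofConv ∘ₗ antipode R) := by
      rw [comul_eq_conv, mul_assoc, conv_comp_antipode, mul_one]
    rw [h1, ← mul_assoc, conv_antipode_comp, one_mul]
  simpa [𝓡.convMul_apply] using congr($key h)

lemma sum_one_tmul_mul_comul_antipode {ι : Type*} {h : A} (𝓡 : Repr R h ι) :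
    ∑ i ∈ 𝓡.index, (1 ⊗ₜ 𝓡.left i) * comul (R := R) (antipode R (𝓡.right i)) =
      antipode R h ⊗ₜ[R] 1 := by
  have key : inrConv R A * toConv ((Bialgebra.comulAlgHom R A).toLinearMap ∘ₗ antipode R) =
      toConv ((inlConv R A).ofConv ∘ₗ antipode R) := by
    have h1 : inrConv R A = toConv ((inlConv R A).ofConv ∘ₗ antipode R) *
        toConv (Bialgebra.comulAlgHom R A).toLinearMap := by
      rw [comul_eq_conv, ← mul_assoc, conv_antipode_comp, one_mul]
    rw [h1, mul_assoc, conv_comp_antipode, mul_one]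
  simpa [𝓡.convMul_apply] using congr($key h)

/-- The antipode is an anti-coalgebra map. -/
lemma comul_antipode {ι : Type*} {h : A} (𝓡 : Repr R h ι) :
    comul (R := R) (antipode R h) =
      ∑ i ∈ 𝓡.index, antipode R (𝓡.right i) ⊗ₜ antipode R (𝓡.left i) := by
  have key : toConv ((Bialgebra.comulAlgHom R A).toLinearMap ∘ₗ antipode R) =
      toConv ((inrConv R A).ofConv ∘ₗ antipode R) *
      toConv ((inlConv R A).ofConv ∘ₗ antipode R) := by
    refine left_inv_eq_right_inv (conv_antipode_comp _) ?_
    rw [comul_eq_conv, mul_assoc, ← mul_assoc (inrConv R A), conv_comp_antipode, one_mul,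
      conv_comp_antipode]
  simpa [𝓡.convMul_apply] using congr($key h)

end Sweedler

section Frobenius

open Coalgebra HopfAlgebra

variable {R : Type*} [Field R] {A : Type*} [Ring A] [HopfAlgebra R A]

lemma contractL_add_left (f g : A →ₗ[R] R) (t : A ⊗[R] A) :
    contractL (f + g) t = contractL f t + contractL g t := by
  simp [contractL, LinearMap.rTensor_add]

lemma contractL_smul_left (c : R) (f : A →ₗ[R] R) (t : A ⊗[R] A) :
    contractL (c • f) t = c • contractL f t := by
  simp [contractL, LinearMap.rTensor_smul]

lemma contractL_contractL_comul (f g : A →ₗ[R] R) (x : A) :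
    contractL (g ∘ₗ contractL f ∘ₗ comul (R := R)) (comul (R := R) x) =
      contractL g (comul (R := R) (contractL f (comul (R := R) x))) := by
  refine eq_of_forall_dual_eq (R := R) fun p => ?_
  rw [apply_contractL, apply_contractL, LinearMap.comp_apply, LinearMap.comp_apply,
    contractL_contractR_comul]

/-- A two-sided integral of `A` normalized by `ε(Λ) = 1`. -/
structure IsNormalizedIntegral (R : Type*) [Field R] {A : Type*} [Ring A] [HopfAlgebra R A]
    (Λ : A) : Prop where
  counit_eq : counit (R := R) Λ = 1
  mul_left : ∀ x, x * Λ = counit (R := R) x • Λ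
  mul_right : ∀ x, Λ * x = counit (R := R) x • Λ

lemma exists_left_integral [IsSemisimpleRing A] :
    ∃ Λ : A, counit (R := R) Λ = 1 ∧ ∀ x, x * Λ = counit (R := R) x • Λ := by
  obtain ⟨J, hJ⟩ := exists_isCompl (RingHom.ker (Bialgebra.counitAlgHom R A))
  obtain ⟨a, ha, b, hb, hab⟩ := Submodule.mem_sup.1
    (hJ.sup_eq_top ▸ Submodule.mem_top : (1 : A) ∈ RingHom.ker (Bialgebra.counitAlgHom R A) ⊔ J)
  have hb1 : counit (R := R) b = 1 := by
    have := congrArg (counit (R := R)) hab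
    simpa [show counit (R := R) a = 0 by simpa [RingHom.mem_ker] using ha] using this
  refine ⟨b, hb1, fun x => ?_⟩
  have h1 : (x - algebraMap R A (counit (R := R) x)) * b ∈ J := J.smul_mem _ hb
  have h2 : (x - algebraMap R A (counit (R := R) x)) * b ∈
      RingHom.ker (Bialgebra.counitAlgHom R A) := by
    simp [RingHom.mem_ker]
  have := (Submodule.disjoint_def.1 hJ.disjoint) _ h2 h1
  rwa [sub_mul, sub_eq_zero, ← Algebra.smul_def] at this

lemma exists_right_integral [IsSemisimpleRing A] :
    ∃ Λ : A, counit (R := R) Λ = 1 ∧ ∀ x, Λ * x = counit (R := R) x • Λ := by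
  let e : Aᵐᵒᵖ →+* R := (Bialgebra.counitAlgHom R A).toRingHom.fromOpposite
    fun x y => Commute.all _ _
  have he : ∀ x, e x = counit (R := R) x.unop := fun x => rfl
  obtain ⟨J, hJ⟩ := exists_isCompl (RingHom.ker e)
  obtain ⟨a, ha, b, hb, hab⟩ := Submodule.mem_sup.1
    (hJ.sup_eq_top ▸ Submodule.mem_top : (1 : Aᵐᵒᵖ) ∈ RingHom.ker e ⊔ J)
  have hb1 : e b = 1 := by
    have := congrArg e hab
    simpa [RingHom.mem_ker.1 ha] using this
  refine ⟨b.unop, hb1, fun x => ?_⟩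
  let y : Aᵐᵒᵖ := MulOpposite.op (x - algebraMap R A (counit (R := R) x))
  have h1 : y * b ∈ J := J.smul_mem _ hb
  have h2 : y * b ∈ RingHom.ker e := by
    simp [RingHom.mem_ker, he, y]
  have := congrArg MulOpposite.unop ((Submodule.disjoint_def.1 hJ.disjoint) _ h2 h1)
  rw [MulOpposite.unop_mul, MulOpposite.unop_op, MulOpposite.unop_zero, mul_sub,
    sub_eq_zero] at this
  rw [this, Algebra.smul_def, Algebra.commutes]

lemma exists_isNormalizedIntegral [IsSemisimpleRing A] :
    ∃ Λ : A, IsNormalizedIntegral R Λ := by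
  obtain ⟨Λ, h1, hl⟩ := exists_left_integral (R := R) (A := A)
  obtain ⟨Λ', h1', hr⟩ := exists_right_integral (R := R) (A := A)
  have : Λ = Λ' := by
    have h := hl Λ'
    rw [hr Λ, h1, h1', one_smul, one_smul] at h
    exact h.symm
  subst this
  exact ⟨Λ, h1, hl, hr⟩

lemma comul_mul_tmul_one {Λ h : A} {ι : Type*} (𝓡 : Repr R h ι)
    (hr : ∀ i ∈ 𝓡.index, Λ * 𝓡.left i = counit (R := R) (𝓡.left i) • Λ) :
    comul (R := R) Λ * (h ⊗ₜ 1) = comul (R := R) Λ * (1 ⊗ₜ[R] antipode R h) := by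
  rw [← sum_comul_mul_one_tmul_antipode 𝓡, Finset.mul_sum]
  have : ∀ i ∈ 𝓡.index, comul (R := R) Λ *
      (comul (R := R) (𝓡.left i) * (1 ⊗ₜ antipode R (𝓡.right i))) =
      comul (R := R) Λ * (1 ⊗ₜ antipode R (counit (R := R) (𝓡.left i) • 𝓡.right i)) := by
    intro i hi
    rw [← mul_assoc, ← Bialgebra.comul_mul, hr i hi]
    simp
  rw [Finset.sum_congr rfl this, ← Finset.mul_sum, ← TensorProduct.tmul_sum, ← map_sum,
    sum_counit_smul]

lemma antipode_tmul_one_mul_comul {Λ h : A} {ι : Type*} (𝓡 : Repr R h ι)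
    (hl : ∀ i ∈ 𝓡.index, 𝓡.right i * Λ = counit (R := R) (𝓡.right i) • Λ) :
    (antipode R h ⊗ₜ 1) * comul (R := R) Λ = (1 ⊗ₜ[R] h) * comul (R := R) Λ := by
  rw [← sum_antipode_tmul_one_mul_comul 𝓡, Finset.sum_mul]
  have : ∀ i ∈ 𝓡.index, (antipode R (𝓡.left i) ⊗ₜ[R] 1) * comul (R := R) (𝓡.right i) *
      comul (R := R) Λ =
      (antipode R (counit (R := R) (𝓡.right i) • 𝓡.left i) ⊗ₜ 1) * comul (R := R) Λ := by
    intro i hi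
    rw [mul_assoc, ← Bialgebra.comul_mul, hl i hi]
    rw [map_smul, map_smul, mul_smul_comm, ← TensorProduct.smul_tmul', smul_mul_assoc]
  rw [Finset.sum_congr rfl this, ← Finset.sum_mul, ← TensorProduct.sum_tmul, ← map_sum]
  congr 3
  conv_lhs => rw [← contractR_counit_comul (R := R) h, ← 𝓡.eq]
  simp

namespace IsNormalizedIntegral

variable {Λ : A} (hΛ : IsNormalizedIntegral R Λ)
include hΛ

lemma contractL_mulRight (f : A →ₗ[R] R) (h : A) :
    contractL (f ∘ₗ LinearMap.mulRight R h) (comul (R := R) Λ) =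
      contractL f (comul (R := R) Λ) * antipode R h := by
  rw [← contractL_mul_tmul_one, comul_mul_tmul_one (ℛ R h) fun i _ => hΛ.mul_right _,
    contractL_mul_one_tmul]

lemma contractL_mulLeft (f : A →ₗ[R] R) (h : A) :
    contractL (f ∘ₗ LinearMap.mulLeft R (antipode R h)) (comul (R := R) Λ) =
      h * contractL f (comul (R := R) Λ) := by
  rw [← contractL_tmul_one_mul, antipode_tmul_one_mul_comul (ℛ R h) fun i _ => hΛ.mul_left _,
    contractL_one_tmul_mul]

lemma contractR_mulRight (f : A →ₗ[R] R) (h : A) :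
    contractR (f ∘ₗ LinearMap.mulRight R (antipode R h)) (comul (R := R) Λ) =
      contractR f (comul (R := R) Λ) * h := by
  rw [← contractR_mul_one_tmul, ← comul_mul_tmul_one (ℛ R h) fun i _ => hΛ.mul_right _,
    contractR_mul_tmul_one]

lemma contractR_mulLeft (f : A →ₗ[R] R) (h : A) :
    contractR (f ∘ₗ LinearMap.mulLeft R h) (comul (R := R) Λ) =
      antipode R h * contractR f (comul (R := R) Λ) := by
  rw [← contractR_one_tmul_mul, ← antipode_tmul_one_mul_comul (ℛ R h) fun i _ => hΛ.mul_left _,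
    contractR_tmul_one_mul]

variable [FiniteDimensional R A]

lemma contractL_surjective (a : A) : ∃ f : A →ₗ[R] R, contractL f (comul (R := R) Λ) = a := by
  let b := Module.finBasis R A
  have h1 : ∑ i, antipode R (b i) * contractL (b.coord i) (comul (R := R) Λ) = 1 := by
    have := mul_antipode_rTensor_comul_apply (R := R) Λ
    rw [← sum_tmul_contractL b (comul (R := R) Λ)] at this
    simpa [hΛ.counit_eq] using this
  refine ⟨∑ i, (b.coord i) ∘ₗ LinearMap.mulLeft R (antipode R (a * antipode R (b i))), ?_⟩
  have hs : ∀ (s : Finset (Fin (Module.finrank R A))) (p : Fin (Module.finrank R A) → A →ₗ[R] R)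
      (t : A ⊗[R] A), contractL (∑ i ∈ s, p i) t = ∑ i ∈ s, contractL (p i) t := by
    intro s p t
    induction s using Finset.cons_induction with
    | empty => simp [contractL]
    | cons i s hi ih => rw [Finset.sum_cons, Finset.sum_cons, contractL_add_left, ih]
  rw [hs, Finset.sum_congr rfl fun i _ => hΛ.contractL_mulLeft _ _]
  simp_rw [mul_assoc]
  rw [← Finset.mul_sum, h1, mul_one]

lemma contractL_injective {f g : A →ₗ[R] R}
    (h : contractL f (comul (R := R) Λ) = contractL g (comul (R := R) Λ)) : f = g := by
  let F : Module.Dual R A →ₗ[R] A :=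
    { toFun := fun f => contractL f (comul (R := R) Λ)
      map_add' := fun f g => contractL_add_left f g _
      map_smul' := fun c f => contractL_smul_left c f _ }
  have hF : Function.Surjective F := fun a => hΛ.contractL_surjective a
  exact (LinearMap.injective_iff_surjective_of_finrank_eq_finrank
    (Subspace.dual_finrank_eq (K := R) (V := A))).2 hF h

lemma exists_contractL_eq_one : ∃ l : A →ₗ[R] R, contractL l (comul (R := R) Λ) = 1 :=
  hΛ.contractL_surjective 1

lemma antipode_injective : Function.Injective (antipode R (A := A)) := by
  rw [injective_iff_map_eq_zero]
  intro h hh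
  obtain ⟨l, hl⟩ := hΛ.exists_contractL_eq_one
  have := hΛ.contractL_mulLeft l h
  rw [hl, mul_one, hh] at this
  rw [← this]
  simp [contractL]

variable {l : A →ₗ[R] R} (hl : contractL l (comul (R := R) Λ) = 1)
include hl

omit hΛ [FiniteDimensional R A] in
lemma apply_integral : l Λ = 1 := by
  have := apply_contractL l (counit (R := R)) (comul (R := R) Λ)
  rw [hl, contractR_counit_comul] at this
  simpa using this.symm

lemma contractL_comul (x : A) : contractL l (comul (R := R) x) = l x • 1 := by
  refine eq_of_forall_dual_eq (R := R) fun f => ?_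
  have : f ∘ₗ contractL l ∘ₗ comul (R := R) = f 1 • l := by
    apply hΛ.contractL_injective
    rw [contractL_contractL_comul, hl, contractL_smul_left, hl]
    simp [Algebra.TensorProduct.one_def]
  have := LinearMap.congr_fun this x
  simpa [mul_comm] using this

lemma nakayama (x y : A) : l (antipode R (antipode R x) * y) = l (y * x) := by
  have : l ∘ₗ LinearMap.mulLeft R (antipode R (antipode R x)) =
      l ∘ₗ LinearMap.mulRight R x := by
    apply hΛ.contractL_injective
    rw [hΛ.contractL_mulLeft, hΛ.contractL_mulRight, hl, one_mul, mul_one]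
  exact LinearMap.congr_fun this y

lemma eq_zero_of_forall_mul {x : A} (h : ∀ y, l (y * x) = 0) : x = 0 := by
  have h0 : l ∘ₗ LinearMap.mulRight R x = 0 := LinearMap.ext fun y => h y
  have := hΛ.contractL_mulRight l x
  rw [h0, hl, one_mul] at this
  apply hΛ.antipode_injective
  rw [← this]
  simp [contractL]

lemma contractR_comul (x : A) :
    contractR l (comul (R := R) x) = l x • contractR l (comul (R := R) Λ) := by
  refine eq_of_forall_dual_eq (R := R) fun f => ?_
  have : l ∘ₗ contractL f ∘ₗ comul (R := R) = f (contractR l (comul (R := R) Λ)) • l := by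
    apply hΛ.contractL_injective
    rw [contractL_contractL_comul, hΛ.contractL_comul hl, contractL_smul_left, hl,
      apply_contractL]
  have := LinearMap.congr_fun this x
  rw [LinearMap.comp_apply, LinearMap.comp_apply, apply_contractL] at this
  simpa [mul_comm] using this

lemma isGroupLikeElem : IsGroupLikeElem R (contractR l (comul (R := R) Λ)) := by
  refine ⟨?_, ?_⟩
  · rw [← apply_contractL, contractL_counit_comul, apply_integral hl]
  · refine eq_of_contractL_eq fun f => ?_
    rw [contractL_contractR_comul, hΛ.contractR_comul hl, apply_contractL, contractL_tmul]

lemma groupLike_mul (x : A) : contractR l (comul (R := R) Λ) * x =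
    antipode R (antipode R (antipode R (antipode R x))) * contractR l (comul (R := R) Λ) := by
  rw [← hΛ.contractR_mulRight, ← hΛ.contractR_mulLeft]
  congr 2
  ext y
  exact (hΛ.nakayama hl (antipode R x) y).symm

/-- The trace formula for the squared antipode. -/
lemma trace_antipode_sq_mul (b : A) :
    LinearMap.trace R A (LinearMap.mulRight R b ∘ₗ antipode R ∘ₗ antipode R) = l b := by
  let φ : A ⊗[R] A →ₗ[R] A →ₗ[R] A := TensorProduct.lift
    (LinearMap.mk₂ R (fun a c => (l ∘ₗ LinearMap.mulLeft R a).smulRight (antipode R c * b))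
      (fun _ _ _ => by ext; simp [add_mul, add_smul])
      (fun _ _ _ => by ext; simp [smul_smul])
      (fun _ _ _ => by ext; simp [add_mul])
      (fun c a d => by ext y; simp [smul_comm (l (a * y)) c]))
  have h1 : φ (comul (R := R) Λ) = LinearMap.mulRight R b ∘ₗ antipode R ∘ₗ antipode R := by
    ext x
    have := hΛ.contractL_mulRight l x
    rw [hl, one_mul] at this
    rw [LinearMap.comp_apply, LinearMap.comp_apply, ← this]
    induction comul (R := R) Λ with
    | zero => simp
    | add s t hs ht => simp only [map_add, LinearMap.add_apply, hs, ht]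
    | tmul a c => simp [φ]
  have h2 : ∀ t : A ⊗[R] A, LinearMap.trace R A (φ t) =
      l (LinearMap.mul' R A ((antipode R).lTensor A t) * b) := by
    intro t
    induction t with
    | zero => simp
    | add s t hs ht => simp only [map_add, add_mul, hs, ht]
    | tmul a c => simp [φ, mul_assoc]
  rw [← h1, h2, mul_antipode_lTensor_comul_apply, hΛ.counit_eq, map_one, one_mul]

end IsNormalizedIntegral

end Frobenius

section Positivity

variable {F : Type*} [Field F]

lemma exists_trace_pow_eq [CharZero F] {V : Type*} [AddCommGroup V] [Module F V]
    [FiniteDimensional F V] {N : ℕ} (hN : 0 < N) {ζ : F} (hζ : IsPrimitiveRoot ζ N)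
    (f : Module.End F V) (hf : f ^ N = 1) :
    ∃ r : ℕ → ℕ, ∀ m, LinearMap.trace F V (f ^ m) =
      ∑ j ∈ Finset.range N, (r j : F) * ζ ^ (j * m) := by
  have hζ0 : ζ ≠ 0 := hζ.ne_zero hN.ne'
  have hNF : (N : F) ≠ 0 := Nat.cast_ne_zero.2 hN.ne'
  let P : ℕ → Module.End F V := fun j =>
    (N : F)⁻¹ • ∑ m ∈ Finset.range N, (ζ⁻¹ ^ (j * m)) • f ^ m
  have hshift : ∀ j, f * P j = ζ ^ j • P j := by
    intro j
    simp only [P, mul_smul_comm, Finset.mul_sum]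
    rw [smul_comm]
    congr 1
    have e1 : ∀ m, (ζ⁻¹ ^ (j * m)) • (f * f ^ m) =
        ζ ^ j • ((ζ⁻¹ ^ (j * (m + 1))) • f ^ (m + 1)) := by
      intro m
      rw [smul_smul, pow_succ' f]
      congr 1
      rw [mul_add, pow_add, mul_one, mul_comm (ζ ^ j), mul_assoc, ← mul_pow, inv_mul_cancel₀ hζ0,
        one_pow, mul_one]
    rw [Finset.sum_congr rfl fun m _ => e1 m, ← Finset.smul_sum]
    congr 1
    have e2 := Finset.sum_range_succ (fun m => (ζ⁻¹ ^ (j * m)) • f ^ m) N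
    rw [Finset.sum_range_succ'] at e2
    have e3 : (ζ⁻¹ ^ (j * N)) • f ^ N = (ζ⁻¹ ^ (j * 0)) • f ^ 0 := by
      rw [hf, mul_comm j N, pow_mul, inv_pow, hζ.pow_eq_one]
      simp
    rw [e3] at e2
    exact add_right_cancel e2
  have hpow : ∀ j m, f ^ m * P j = ζ ^ (j * m) • P j := by
    intro j m
    induction m with
    | zero => simp
    | succ m ih => rw [pow_succ, mul_assoc, hshift, mul_smul_comm, ih, smul_smul, ← pow_add,
        mul_add, mul_one, add_comm]
  have hidem : ∀ j, IsIdempotentElem (P j) := by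
    intro j
    have : P j * P j = (N : F)⁻¹ • ∑ m ∈ Finset.range N, (ζ⁻¹ ^ (j * m)) • (f ^ m * P j) := by
      conv_lhs => enter [1]; simp only [P]
      simp only [smul_mul_assoc, Finset.sum_mul]
    rw [IsIdempotentElem, this]
    simp only [hpow, smul_smul, ← mul_pow, inv_mul_cancel₀ hζ0, one_pow, one_smul,
      Finset.sum_const, Finset.card_range]
    rw [← Nat.cast_smul_eq_nsmul F, smul_smul, inv_mul_cancel₀ hNF, one_smul]
  have hsum : ∑ j ∈ Finset.range N, P j = 1 := by
    simp only [P]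
    rw [← Finset.smul_sum, Finset.sum_comm]
    simp only [← Finset.sum_smul]
    rw [Finset.sum_eq_single_of_mem 0 (Finset.mem_range.2 hN)]
    · simp [smul_smul, inv_mul_cancel₀ hNF]
    · intro m hm hm0
      have hm' := Finset.mem_range.1 hm
      have h1 : (ζ⁻¹ ^ m) ≠ 1 := by
        rw [inv_pow, inv_ne_one]
        exact hζ.pow_ne_one_of_pos_of_lt hm0 hm'
      have h2 : ∑ j ∈ Finset.range N, ζ⁻¹ ^ (j * m) = 0 := by
        have h3 := mul_geom_sum (ζ⁻¹ ^ m) N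
        rw [← pow_mul, mul_comm m N, pow_mul, inv_pow ζ N, hζ.pow_eq_one, inv_one, one_pow,
          sub_self, mul_eq_zero, sub_eq_zero] at h3
        have h4 := h3.resolve_left h1
        rw [← h4]
        exact Finset.sum_congr rfl fun j _ => by rw [← pow_mul, mul_comm]
      rw [h2, zero_smul]
  refine ⟨fun j => Module.finrank F (LinearMap.range (P j)), fun m => ?_⟩
  have : f ^ m = ∑ j ∈ Finset.range N, ζ ^ (j * m) • P j := by
    rw [← mul_one (f ^ m), ← hsum, Finset.mul_sum]
    exact Finset.sum_congr rfl fun j _ => hpow j m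
  rw [this, map_sum]
  refine Finset.sum_congr rfl fun j _ => ?_
  rw [map_smul, (LinearMap.IsIdempotentElem.isProj_range _ (hidem j)).trace, smul_eq_mul, mul_comm]

lemma sum_trace_mul_trace_inv_ne_zero [CharZero F] [IsAlgClosed F] {ι : Type*} [Fintype ι]
    [Nonempty ι] {n : ι → ℕ} {N : ℕ} (hN : 0 < N)
    (w : (i : ι) → Matrix (Fin (n i)) (Fin (n i)) F)
    (hw : ∀ i, w i ^ N = 1) (ht : ∀ i, (w i).trace ≠ 0) :
    ∑ i, (w i).trace * (w i ^ (N - 1)).trace ≠ 0 := by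
  obtain ⟨ζ, hζ⟩ : ∃ ζ : F, IsPrimitiveRoot ζ N := by
    have : NeZero N := ⟨hN.ne'⟩
    exact HasEnoughRootsOfUnity.exists_primitiveRoot F N
  have hr : ∀ i, ∃ r : ℕ → ℕ, ∀ m, (w i ^ m).trace =
      ∑ j ∈ Finset.range N, (r j : F) * ζ ^ (j * m) := by
    intro i
    obtain ⟨r, hr⟩ := exists_trace_pow_eq hN hζ (Matrix.toLin' (w i))
      (by rw [← Matrix.toLin'_pow, hw, Matrix.toLin'_one]; rfl)
    refine ⟨r, fun m => ?_⟩
    rw [← hr, ← Matrix.toLin'_pow, Matrix.trace_toLin'_eq]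
  choose r hr using hr
  let p : ι → ℕ → Polynomial ℚ := fun i m =>
    ∑ j ∈ Finset.range N, (Polynomial.C (r i j : ℚ)) * Polynomial.X ^ (j * m)
  have hp : ∀ (E : Type _) [Field E] [CharZero E] (x : E) (i m),
      Polynomial.aeval x (p i m) = ∑ j ∈ Finset.range N, (r i j : E) * x ^ (j * m) := by
    intro E _ _ x i m
    simp [p]
  have hω := Complex.isPrimitiveRoot_exp N hN.ne'
  set ω : ℂ := Complex.exp (2 * Real.pi * Complex.I / N) with hωdef
  have transfer : ∀ q : Polynomial ℚ, Polynomial.aeval ζ q = 0 ↔ Polynomial.aeval ω q = 0 := by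
    intro q
    rw [← minpoly.dvd_iff, ← minpoly.dvd_iff, ← Polynomial.cyclotomic_eq_minpoly_rat hζ hN,
      ← Polynomial.cyclotomic_eq_minpoly_rat hω hN]
  have hp' : ∀ (x : ℂ) (i m),
      Polynomial.aeval x (p i m) = ∑ j ∈ Finset.range N, (r i j : ℂ) * x ^ (j * m) := by
    intro x i m
    simp [p]
  intro h0
  have h1 : Polynomial.aeval ζ (∑ i, p i 1 * p i (N - 1)) = 0 := by
    rw [map_sum, ← h0]
    refine Finset.sum_congr rfl fun i _ => ?_
    rw [map_mul, hp, hp, ← hr, ← hr, pow_one]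
  rw [transfer] at h1
  have hconj : ∀ i, Polynomial.aeval ω (p i (N - 1)) =
      (starRingEnd ℂ) (Polynomial.aeval ω (p i 1)) := by
    intro i
    rw [hp', hp', map_sum]
    refine Finset.sum_congr rfl fun j _ => ?_
    have hnorm : ‖ω‖ = 1 := hω.norm'_eq_one hN.ne'
    have : ω ^ (N - 1) = (starRingEnd ℂ) ω := by
      rw [← Complex.inv_eq_conj hnorm]
      refine eq_inv_of_mul_eq_one_left ?_
      rw [← pow_succ, Nat.sub_add_cancel hN, hω.pow_eq_one]
    rw [map_mul, map_pow, mul_one, mul_comm j, pow_mul, this]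
    simp
  have h2 : ∑ i, Complex.normSq (Polynomial.aeval ω (p i 1)) = 0 := by
    have : ((∑ i, Complex.normSq (Polynomial.aeval ω (p i 1)) : ℝ) : ℂ) = 0 := by
      rw [← h1, map_sum, Complex.ofReal_sum]
      refine Finset.sum_congr rfl fun i _ => ?_
      rw [map_mul, hconj, Complex.mul_conj]
    exact_mod_cast this
  obtain ⟨i⟩ := ‹Nonempty ι›
  rw [Finset.sum_eq_zero_iff_of_nonneg fun i _ => Complex.normSq_nonneg _] at h2
  have h3 := Complex.normSq_eq_zero.1 (h2 i (Finset.mem_univ i))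
  rw [← transfer, hp, ← hr, pow_one] at h3
  exact ht i h3

end Positivity

section BlockAlgebra

variable {F : Type*} [Field F] {ι : Type*} [Fintype ι] [DecidableEq ι] {d : ι → ℕ}

lemma exists_eq_sum_trace_mul
    (l : ((i : ι) → Matrix (Fin (d i)) (Fin (d i)) F) →ₗ[F] F) :
    ∃ v : (i : ι) → Matrix (Fin (d i)) (Fin (d i)) F, ∀ x, l x = ∑ i, (v i * x i).trace := by
  let v : (i : ι) → Matrix (Fin (d i)) (Fin (d i)) F :=
    fun i => Matrix.of fun a b => l (Pi.single i (Matrix.single b a 1))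
  let l' : ((i : ι) → Matrix (Fin (d i)) (Fin (d i)) F) →ₗ[F] F :=
    ∑ i, Matrix.traceLinearMap (Fin (d i)) F F ∘ₗ LinearMap.mulLeft F (v i) ∘ₗ LinearMap.proj i
  have hl' : ∀ x, l' x = ∑ i, (v i * x i).trace := fun x => by simp [l']
  refine ⟨v, fun x => ?_⟩
  rw [← hl']
  congr 1
  refine LinearMap.pi_ext' fun i => Matrix.ext_linearMap _ fun a b => LinearMap.ext_ring ?_
  simp only [LinearMap.comp_apply, Matrix.singleLinearMap_apply, hl', LinearMap.single_apply]
  rw [Finset.sum_eq_single i]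
  · simp [v, Matrix.trace_mul_single]
  · intro j _ hj
    rw [Pi.single_eq_of_ne hj]
    simp
  · simp

lemma trace_mulLeft_mulRight (a c : (i : ι) → Matrix (Fin (d i)) (Fin (d i)) F) :
    LinearMap.trace F _ (LinearMap.mulRight F c ∘ₗ LinearMap.mulLeft F a) =
      ∑ i, (a i).trace * (c i).trace := by
  rw [LinearMap.trace_eq_matrix_trace F (Pi.basis fun i => Matrix.stdBasis F (Fin (d i)) (Fin (d i)))]
  rw [Matrix.trace, Fintype.sum_sigma]
  refine Finset.sum_congr rfl fun i _ => ?_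
  rw [Fintype.sum_prod_type, Matrix.trace, Matrix.trace, Finset.sum_mul_sum]
  refine Finset.sum_congr rfl fun p _ => Finset.sum_congr rfl fun q _ => ?_
  rw [Matrix.diag_apply, LinearMap.toMatrix_apply]
  simp [Matrix.stdBasis_eq_single]
  simp [Matrix.stdBasis, Matrix.mul_apply, Matrix.single_apply, ite_and]

lemma eq_of_forall_sum_trace_mul {a b : (i : ι) → Matrix (Fin (d i)) (Fin (d i)) F}
    (h : ∀ y : (i : ι) → Matrix (Fin (d i)) (Fin (d i)) F,
      ∑ i, (a i * y i).trace = ∑ i, (b i * y i).trace) : a = b := by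
  ext i p q
  have := h (Pi.single i (Matrix.single q p 1))
  have e : ∀ c : (i : ι) → Matrix (Fin (d i)) (Fin (d i)) F,
      ∑ j, (c j * (Pi.single i (Matrix.single q p 1) :
        (i : ι) → Matrix (Fin (d i)) (Fin (d i)) F) j).trace = c i p q := by
    intro c
    rw [Finset.sum_eq_single i]
    · simp [Matrix.trace_mul_single]
    · intro j _ hj
      rw [Pi.single_eq_of_ne hj]
      simp
    · simp
  rwa [e, e] at this

lemma apply_one_ne_zero_of_pi_matrix [CharZero F] [IsAlgClosed F] [Nonempty ι]
    [∀ i, NeZero (d i)]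
    (l : ((i : ι) → Matrix (Fin (d i)) (Fin (d i)) F) →ₗ[F] F)
    (σ : ((i : ι) → Matrix (Fin (d i)) (Fin (d i)) F) →ₗ[F]
      ((i : ι) → Matrix (Fin (d i)) (Fin (d i)) F))
    (hnd : ∀ x, (∀ y, l (y * x) = 0) → x = 0)
    (hnak : ∀ x y, l (σ x * y) = l (y * x))
    (htr : ∀ b, LinearMap.trace F _ (LinearMap.mulRight F b ∘ₗ σ) = l b)
    {N : ℕ} (hN : 0 < N) (hσ : ∀ x, (σ ^ N) x = x) : l 1 ≠ 0 := by
  obtain ⟨v, hv⟩ := exists_eq_sum_trace_mul l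
  obtain ⟨u, huv⟩ : ∃ u, u * v = 1 := by
    have hinj : Function.Injective (LinearMap.mulRight F v) := by
      rw [injective_iff_map_eq_zero]
      intro x hx
      apply hnd
      intro y
      rw [hv]
      refine Finset.sum_eq_zero fun i _ => ?_
      have hxi : x i * v i = 0 := congrFun hx i
      rw [Pi.mul_apply, ← mul_assoc, Matrix.trace_mul_comm, ← mul_assoc, hxi]
      simp
    exact LinearMap.injective_iff_surjective.1 hinj 1
  have huv' : ∀ i, u i * v i = 1 := fun i => congrFun huv i
  have hvu' : ∀ i, v i * u i = 1 := fun i => mul_eq_one_comm.1 (huv' i)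
  have hvu : v * u = 1 := funext hvu'
  have hσ1 : ∀ x, σ x = u * x * v := by
    intro x
    have : v * σ x = x * v := by
      refine eq_of_forall_sum_trace_mul fun y => ?_
      have h := hnak x y
      rw [hv, hv] at h
      simp only [Pi.mul_apply] at h ⊢
      simp only [mul_assoc] at h ⊢
      rw [h]
      refine Finset.sum_congr rfl fun i _ => ?_
      rw [Matrix.trace_mul_comm (x i), mul_assoc]
    rw [mul_assoc, ← this, ← mul_assoc, huv, one_mul]
  have hu : ∀ i, (u i).trace = 1 := by
    have h : ∀ b, l b = ∑ i, ((u i).trace • v i * b i).trace := by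
      intro b
      have e : LinearMap.mulRight F b ∘ₗ σ =
          LinearMap.mulRight F (v * b) ∘ₗ LinearMap.mulLeft F u := by
        refine LinearMap.ext fun x => ?_
        simp [hσ1, mul_assoc]
      rw [← htr, e, trace_mulLeft_mulRight]
      simp [Matrix.trace_smul]
    have h' : (fun i => (u i).trace • v i) = v :=
      eq_of_forall_sum_trace_mul fun y => by rw [← hv, h]
    intro i
    have h1 : (u i).trace • v i = v i := congrFun h' i
    have h2 := congrArg (fun z => z * u i) h1
    simp only [smul_mul_assoc, hvu'] at h2
    simpa using congrFun (congrFun h2 0) 0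
  have hpow : ∀ n x, (σ ^ n) x = u ^ n * x * v ^ n := by
    intro n
    induction n with
    | zero => simp
    | succ n ih =>
      intro x
      rw [pow_succ', Module.End.mul_apply, ih, hσ1, pow_succ' u, pow_succ v]
      simp only [mul_assoc]
  have hcomm : ∀ x, x * u ^ N = u ^ N * x := by
    intro x
    have h := (hpow N x).symm.trans (hσ x)
    have hvuN : v ^ N * u ^ N = 1 := by
      have hc : Commute v u := by rw [Commute, SemiconjBy, hvu, huv]
      rw [← hc.mul_pow, hvu, one_pow]
    calc x * u ^ N = u ^ N * x * v ^ N * u ^ N := by rw [h]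
      _ = u ^ N * x := by rw [mul_assoc, hvuN, mul_one]
  have hscal : ∀ i, ∃ s : F, u i ^ N = Matrix.scalar _ (s ^ N) := by
    intro i
    have : u i ^ N ∈ Set.range (Matrix.scalar (Fin (d i))) := by
      refine Matrix.mem_range_scalar_of_commute_single fun p q _ => ?_
      have h := congrFun (hcomm (Pi.single i (Matrix.single p q 1))) i
      simpa [Commute, SemiconjBy] using h
    obtain ⟨c, hc⟩ := this
    obtain ⟨s, hs⟩ := IsAlgClosed.exists_pow_nat_eq c hN
    exact ⟨s, by rw [hs, hc]⟩
  choose s hs using hscal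
  have hs0 : ∀ i, s i ≠ 0 := by
    intro i h
    have h1 := hs i
    rw [h, zero_pow hN.ne', map_zero] at h1
    have h2 : (u i * v i) ^ N = 0 := by
      have hc : Commute (u i) (v i) := by rw [Commute, SemiconjBy, hvu', huv']
      rw [hc.mul_pow, h1, zero_mul]
    rw [huv', one_pow] at h2
    exact one_ne_zero h2
  let w : (i : ι) → Matrix (Fin (d i)) (Fin (d i)) F := fun i => (s i)⁻¹ • u i
  have hw : ∀ i, w i ^ N = 1 := by
    intro i
    simp only [w, smul_pow, hs]
    rw [Matrix.scalar_apply, Matrix.smul_eq_diagonal_mul, Matrix.diagonal_mul_diagonal]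
    simp [hs0]
  have hwinv : ∀ i, w i ^ (N - 1) = s i • v i := by
    intro i
    have h1 : w i ^ (N - 1) * w i = 1 := by rw [← pow_succ, Nat.sub_add_cancel hN, hw]
    have h2 : w i * (s i • v i) = 1 := by simp [w, smul_smul, hs0, huv']
    exact left_inv_eq_right_inv h1 h2
  have key := sum_trace_mul_trace_inv_ne_zero hN w hw fun i => by
    simp [w, Matrix.trace_smul, hu, hs0]
  convert key using 1
  rw [hv]
  refine Finset.sum_congr rfl fun i _ => ?_
  rw [hwinv]
  simp [w, Matrix.trace_smul, hu, hs0]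

end BlockAlgebra

section AntipodeSquared

open Coalgebra HopfAlgebra WithConv

lemma exists_trace_eq_of_pow_three {F : Type*} [Field F] [CharZero F] {V : Type*}
    [AddCommGroup V] [Module F V] [FiniteDimensional F V] (f : Module.End F V)
    (hf : f * (f * f) = f) :
    ∃ a b : ℕ, LinearMap.trace F V f = a - b ∧ LinearMap.trace F V (f * f) = a + b ∧
      (a = 0 → f * f = -f) ∧ (b = 0 → f * f = f) := by
  have h4 : (f * f) * (f * f) = f * f := by rw [mul_assoc, hf]
  have hf' : f * f * f = f := by rw [mul_assoc, hf]
  let P : Module.End F V := (2⁻¹ : F) • (f * f + f)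
  let Q : Module.End F V := (2⁻¹ : F) • (f * f - f)
  have e1 : (f * f + f) * (f * f + f) = (2 : F) • (f * f + f) := by
    rw [mul_add, add_mul, add_mul, h4, hf, hf', two_smul]
    abel
  have e2 : (f * f - f) * (f * f - f) = (2 : F) • (f * f - f) := by
    rw [mul_sub, sub_mul, sub_mul, h4, hf, hf', two_smul]
    abel
  have hP : IsIdempotentElem P := by
    simp only [IsIdempotentElem, P, smul_mul_smul_comm, e1, smul_smul]
    norm_num
  have hQ : IsIdempotentElem Q := by
    simp only [IsIdempotentElem, Q, smul_mul_smul_comm, e2, smul_smul]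
    norm_num
  have htP := (LinearMap.IsIdempotentElem.isProj_range _ hP).trace
  have htQ := (LinearMap.IsIdempotentElem.isProj_range _ hQ).trace
  have h1 : f = P - Q := by
    simp only [P, Q, ← smul_sub, add_sub_sub_cancel, ← two_smul F f, smul_smul]
    norm_num
  have h2 : f * f = P + Q := by
    simp only [P, Q, ← smul_add, add_add_sub_cancel, ← two_smul F (f * f), smul_smul]
    norm_num
  refine ⟨Module.finrank F (LinearMap.range P), Module.finrank F (LinearMap.range Q), ?_, ?_,
    fun h => ?_, fun h => ?_⟩
  · rw [← htP, ← htQ, ← map_sub, ← h1]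
  · rw [← htP, ← htQ, ← map_add, ← h2]
  · have : P = 0 := LinearMap.range_eq_bot.1 (Submodule.finrank_eq_zero.1 h)
    rw [h2, this, zero_add]
    conv_rhs => rw [h1, this, zero_sub, neg_neg]
  · have : Q = 0 := LinearMap.range_eq_bot.1 (Submodule.finrank_eq_zero.1 h)
    rw [h2, this, add_zero]
    conv_rhs => rw [h1, this, sub_zero]

variable {R : Type*} [Field R] {A : Type*} [Ring A] [HopfAlgebra R A] [FiniteDimensional R A]

lemma exists_pow_eq_one_of_isGroupLikeElem {g : A} (hg : IsGroupLikeElem R g) :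
    ∃ m, 0 < m ∧ g ^ m = 1 := by
  have hfin : {a : A | IsGroupLikeElem R a}.Finite :=
    (linearIndepOn_isGroupLikeElem (R := R) (A := A)).setFinite
  obtain ⟨a, b, hab, h⟩ : ∃ a b : ℕ, a < b ∧ g ^ a = g ^ b := by
    obtain ⟨a, -, b, -, hne, h⟩ := Set.infinite_univ.exists_ne_map_eq_of_mapsTo
      (f := fun n : ℕ => g ^ n) (fun n _ => hg.pow) hfin
    rcases lt_or_gt_of_ne hne with h1 | h1
    · exact ⟨a, b, h1, h⟩
    · exact ⟨b, a, h1, h.symm⟩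
  refine ⟨b - a, Nat.sub_pos_of_lt hab, ?_⟩
  have hu : IsUnit (g ^ a) := hg.isUnit.pow a
  apply hu.mul_left_cancel
  rw [mul_one, ← pow_add, Nat.add_sub_cancel' hab.le, h]

/-- The character of the regular representation. -/
def regChar (R : Type*) [Field R] (A : Type*) [Ring A] [Algebra R A] : A →ₗ[R] R :=
  LinearMap.trace R A ∘ₗ (LinearMap.mul R A)

omit [FiniteDimensional R A] in
lemma regChar_apply (x : A) : regChar R A x = LinearMap.trace R A (LinearMap.mulLeft R x) := rfl

lemma regChar_contractL (x : A) :
    regChar R A (contractL (regChar R A) (comul (R := R) x)) =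
      (Module.finrank R A : R) * regChar R A x := by
  let θ : A ⊗[R] A →ₗ[R] A ⊗[R] A := LinearMap.mul' R (A ⊗[R] A) ∘ₗ
    TensorProduct.map (comul (R := R))
      (Algebra.TensorProduct.includeRight (R := R) (A := A) (B := A)).toLinearMap
  have hθ : ∀ y z, θ (y ⊗ₜ z) = comul (R := R) y * (1 ⊗ₜ z) := fun y z => by simp [θ]
  have hsurj : Function.Surjective θ := by
    rw [← LinearMap.range_eq_top, eq_top_iff]
    rintro t -
    induction t with
    | zero => exact zero_mem _
    | add s t hs ht => exact add_mem hs ht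
    | tmul h z =>
      refine ⟨∑ i ∈ (ℛ R h).index, (ℛ R h).left i ⊗ₜ (antipode R ((ℛ R h).right i) * z), ?_⟩
      have := congrArg (fun s => s * ((1 : A) ⊗ₜ[R] z)) (sum_comul_mul_one_tmul_antipode (ℛ R h))
      simp only [Finset.sum_mul, mul_assoc, Algebra.TensorProduct.tmul_mul_tmul, one_mul,
        mul_one] at this
      rw [map_sum, ← this]
      exact Finset.sum_congr rfl fun i _ => hθ _ _
  let e := LinearEquiv.ofBijective θ ⟨LinearMap.injective_iff_surjective.2 hsurj, hsurj⟩
  have h1 : LinearMap.mulLeft R (comul (R := R) x) =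
      e.conj (TensorProduct.map (LinearMap.mulLeft R x) LinearMap.id) := by
    refine LinearMap.ext fun t => ?_
    obtain ⟨s, rfl⟩ := e.surjective t
    rw [LinearEquiv.conj_apply_apply, e.symm_apply_apply]
    change comul (R := R) x * θ s = θ _
    induction s with
    | zero => simp
    | add s t hs ht => simp only [map_add, mul_add, hs, ht]
    | tmul y z => simp [hθ, mul_assoc]
  have h2 : ∀ t : A ⊗[R] A, LinearMap.trace R _ (LinearMap.mulLeft R t) =
      regChar R A (contractL (regChar R A) t) := by
    intro t
    induction t with
    | zero => simp
    | add s t hs ht =>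
      have : LinearMap.mulLeft R (s + t) = LinearMap.mulLeft R s + LinearMap.mulLeft R t := by
        ext; simp [add_mul]
      rw [this, map_add, hs, ht, map_add, map_add]
    | tmul a b =>
      have : LinearMap.mulLeft R (a ⊗ₜ[R] b) =
          TensorProduct.map (LinearMap.mulLeft R a) (LinearMap.mulLeft R b) := by
        ext; simp
      rw [this, LinearMap.trace_tensorProduct']
      simp [regChar_apply]
  rw [← h2, h1, LinearMap.trace_conj', LinearMap.trace_tensorProduct', LinearMap.trace_id,
    regChar_apply, mul_comm]

omit [FiniteDimensional R A] in
lemma contractL_comul_antipode (f : A →ₗ[R] R) (x : A) :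
    contractL f (comul (R := R) (antipode R x)) =
      antipode R (contractR (f ∘ₗ antipode R) (comul (R := R) x)) := by
  rw [comul_antipode (ℛ R x), ← (ℛ R x).eq]
  simp

omit [FiniteDimensional R A] in
lemma contractR_comul_antipode (f : A →ₗ[R] R) (x : A) :
    contractR f (comul (R := R) (antipode R x)) =
      antipode R (contractL (f ∘ₗ antipode R) (comul (R := R) x)) := by
  rw [comul_antipode (ℛ R x), ← (ℛ R x).eq]
  simp

namespace IsNormalizedIntegral

variable {Λ : A} (hΛ : IsNormalizedIntegral R Λ)
include hΛ

lemma antipode_eq : antipode R Λ = Λ := by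
  have hs : Function.Surjective (antipode R (A := A)) :=
    LinearMap.injective_iff_surjective.1 hΛ.antipode_injective
  obtain ⟨y, hy⟩ := hs Λ
  have h1 := hΛ.mul_right (antipode R Λ)
  rw [counit_antipode, hΛ.counit_eq, one_smul] at h1
  have h2 : Λ * antipode R Λ = antipode R Λ := by
    have h3 := antipode_mul_antidistrib (R := R) Λ y
    rw [hy, hΛ.mul_right, map_smul, ← counit_antipode (R := R) (a := y), hy, hΛ.counit_eq,
      one_smul] at h3
    exact h3.symm
  exact h2.symm.trans h1

lemma regChar_eq_one : regChar R A Λ = 1 := by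
  have : LinearMap.mulLeft R Λ = (counit (R := R)).smulRight Λ := by
    ext x; simp [hΛ.mul_right]
  rw [regChar_apply, this, LinearMap.trace_smulRight, hΛ.counit_eq]

variable {l : A →ₗ[R] R} (hl : contractL l (comul (R := R) Λ) = 1)
include hl

lemma trace_antipode_sq_comp_contractL :
    LinearMap.trace R A ((antipode R ∘ₗ antipode R) ∘ₗ
      (contractL (regChar R A) ∘ₗ comul (R := R))) = l 1 := by
  set ρ : A →ₗ[R] A := contractL (regChar R A) ∘ₗ comul (R := R) with hρ
  let φ : A ⊗[R] A →ₗ[R] A →ₗ[R] A := TensorProduct.lift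
    (LinearMap.mk₂ R (fun a c => (l ∘ₗ LinearMap.mulLeft R a ∘ₗ ρ).smulRight (antipode R c))
      (fun _ _ _ => by ext; simp [add_mul, add_smul])
      (fun _ _ _ => by ext; simp [smul_smul])
      (fun _ _ _ => by ext; simp)
      (fun c a d => by ext y; simp [smul_comm _ c]))
  have h1 : φ (comul (R := R) Λ) = (antipode R ∘ₗ antipode R) ∘ₗ ρ := by
    ext x
    have := hΛ.contractL_mulRight l (ρ x)
    rw [hl, one_mul] at this
    rw [LinearMap.comp_apply, LinearMap.comp_apply, ← this]
    induction comul (R := R) Λ with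
    | zero => simp
    | add s t hs ht => simp only [map_add, LinearMap.add_apply, hs, ht]
    | tmul a c => simp [φ]
  have h2 : ∀ t : A ⊗[R] A, LinearMap.trace R A (φ t) =
      l (LinearMap.mul' R A ((ρ ∘ₗ antipode R).lTensor A t)) := by
    intro t
    induction t with
    | zero => simp
    | add s t hs ht => simp only [map_add, hs, ht]
    | tmul a c => simp [φ]
  have h3 : toConv (LinearMap.id (R := R) (M := A)) * toConv (ρ ∘ₗ antipode R) =
      toConv (Algebra.linearMap R A ∘ₗ regChar R A ∘ₗ antipode R) := by
    have : toConv (ρ ∘ₗ antipode R) = toConv (antipode R) *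
        toConv (Algebra.linearMap R A ∘ₗ regChar R A ∘ₗ antipode R) := by
      ext x
      rw [(ℛ R x).convMul_apply]
      simp only [LinearMap.comp_apply, hρ]
      rw [contractL_comul_antipode, ← (ℛ R x).eq]
      simp [← Algebra.commutes (R := R), ← Algebra.smul_def]
    rw [this, ← mul_assoc]
    have h4 := conv_comp_antipode (AlgHom.id R A)
    rw [AlgHom.toLinearMap_id, LinearMap.id_comp] at h4
    rw [h4, one_mul]
  have h5 := LinearMap.congr_fun (congrArg ofConv h3) Λ
  rw [← h1, h2]
  have h6 : LinearMap.mul' R A ((ρ ∘ₗ antipode R).lTensor A (comul (R := R) Λ)) = 1 := by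
    rw [(ℛ R Λ).convMul_apply] at h5
    rw [← (ℛ R Λ).eq]
    simpa [hΛ.antipode_eq, hΛ.regChar_eq_one] using h5
  rw [h6]

variable [CharZero R] [IsAlgClosed R] [IsSemisimpleRing A]

lemma apply_one_ne_zero : l 1 ≠ 0 := by
  obtain ⟨n, d, hd, ⟨e⟩⟩ := IsSemisimpleRing.exists_algEquiv_pi_matrix_of_isAlgClosed R A
  have hg := hΛ.isGroupLikeElem hl
  set g := contractR l (comul (R := R) Λ) with hgdef
  obtain ⟨m, hm, hgm⟩ := exists_pow_eq_one_of_isGroupLikeElem hg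
  let s : A →ₗ[R] A := antipode R ∘ₗ antipode R
  have hs : ∀ j x, g ^ j * x = (s ^ (2 * j)) x * g ^ j := by
    intro j
    induction j with
    | zero => simp
    | succ j ih =>
      intro x
      have h1 : (s ^ (2 * (j + 1))) x = (s ^ (2 * j)) (s (s x)) := by
        rw [show 2 * (j + 1) = 2 * j + 1 + 1 by ring, pow_succ, pow_succ]
        rfl
      have h2 : g * x = s (s x) * g := hΛ.groupLike_mul hl x
      rw [pow_succ, mul_assoc, h2, ← mul_assoc, ih, h1, mul_assoc]
  have hs' : ∀ x, (s ^ (2 * m)) x = x := by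
    intro x
    have := hs m x
    rw [hgm, one_mul, mul_one] at this
    exact this.symm
  let E := e.toLinearEquiv
  let σ := E.conj s
  have hσ : ∀ x, σ (e x) = e (s x) := fun x => by
    change E.conj s (E x) = E (s x)
    rw [LinearEquiv.conj_apply_apply, E.symm_apply_apply]
  have hσpow : ∀ j x, (σ ^ j) (e x) = e ((s ^ j) x) := by
    intro j
    induction j with
    | zero => simp
    | succ j ih =>
      intro x
      rw [pow_succ, pow_succ, Module.End.mul_apply, Module.End.mul_apply, hσ, ih]
  let l' : ((i : Fin n) → Matrix (Fin (d i)) (Fin (d i)) R) →ₗ[R] R := l ∘ₗ E.symm.toLinearMap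
  have hl' : ∀ x, l' (e x) = l x := fun x => congrArg l (E.symm_apply_apply x)
  have hne : Nonempty (Fin n) := by
    by_contra hcon
    rw [not_nonempty_iff] at hcon
    have h0 : Λ = 0 := e.injective (Subsingleton.elim _ _)
    have := hΛ.counit_eq
    rw [h0, map_zero] at this
    exact zero_ne_one this
  have key := apply_one_ne_zero_of_pi_matrix l' σ ?_ ?_ ?_ (N := 2 * m) (by omega) ?_
  · rwa [← map_one e, hl'] at key
  · intro x hx
    obtain ⟨x, rfl⟩ := e.surjective x
    rw [hΛ.eq_zero_of_forall_mul hl (x := x) fun y => ?_, map_zero]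
    rw [← hl', map_mul, hx]
  · intro x y
    obtain ⟨x, rfl⟩ := e.surjective x
    obtain ⟨y, rfl⟩ := e.surjective y
    rw [hσ, ← map_mul, ← map_mul, hl', hl']
    exact hΛ.nakayama hl x y
  · intro b
    obtain ⟨b, rfl⟩ := e.surjective b
    rw [hl', ← hΛ.trace_antipode_sq_mul hl b, ← LinearMap.trace_conj' _ E]
    congr 1
    refine LinearMap.ext fun x => ?_
    obtain ⟨x, rfl⟩ := e.surjective x
    have h1 : E.conj (LinearMap.mulRight R b ∘ₗ antipode R ∘ₗ antipode R) (e x) =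
        e (s x * b) := by
      change E.conj _ (E x) = E _
      rw [LinearEquiv.conj_apply_apply, E.symm_apply_apply]
      rfl
    rw [h1, LinearMap.comp_apply, hσ, LinearMap.mulRight_apply, map_mul]
  · intro x
    obtain ⟨x, rfl⟩ := e.surjective x
    rw [hσpow, hs']

lemma contractR_eq_one : contractR l (comul (R := R) Λ) = 1 := by
  have h := hΛ.contractR_comul hl 1
  have h1 : comul (R := R) (1 : A) = 1 ⊗ₜ 1 := by simp [Algebra.TensorProduct.one_def]
  rw [h1, contractR_tmul] at h
  exact (smul_right_injective A (hΛ.apply_one_ne_zero hl) h).symm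

lemma antipode_antipode (x : A) : antipode R (antipode R x) = x := by
  have h4 : ∀ x : A, antipode R (antipode R (antipode R (antipode R x))) = x := by
    intro x
    have := hΛ.groupLike_mul hl x
    rw [hΛ.contractR_eq_one hl, one_mul, mul_one] at this
    exact this.symm
  let s : Module.End R A := antipode R ∘ₗ antipode R
  have hss : s * s = 1 := LinearMap.ext h4
  let ρ : Module.End R A := contractL (regChar R A) ∘ₗ comul (R := R)
  set n : R := (Module.finrank R A : R) with hn
  have hnt : Nontrivial A := by
    refine nontrivial_of_ne Λ 0 fun h0 => ?_
    have := hΛ.counit_eq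
    rw [h0, map_zero] at this
    exact zero_ne_one this
  have hn0 : n ≠ 0 := Nat.cast_ne_zero.2 (Module.finrank_pos (R := R) (M := A)).ne'
  have hρρ : ρ * ρ = n • ρ := by
    refine LinearMap.ext fun x => ?_
    change contractL (regChar R A) (comul (R := R) (contractL (regChar R A) (comul (R := R) x))) =
      n • contractL (regChar R A) (comul (R := R) x)
    rw [← contractL_contractL_comul, ← contractL_smul_left]
    congr 2
    exact LinearMap.ext fun y => regChar_contractL y
  have hmul : ∀ x y, s (x * y) = s x * s y := fun x y => by
    simp [s, antipode_mul_antidistrib]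
  have hχ : regChar R A ∘ₗ s = regChar R A := by
    refine LinearMap.ext fun x => ?_
    let e : A ≃ₗ[R] A := LinearEquiv.ofLinearMap s s hss hss
    rw [LinearMap.comp_apply, regChar_apply, regChar_apply,
      ← LinearMap.trace_conj' (LinearMap.mulLeft R x) e]
    congr 1
    refine LinearMap.ext fun y => ?_
    rw [LinearEquiv.conj_apply]
    change s x * y = s (x * s y)
    rw [hmul]
    congr 1
    exact (h4 y).symm
  have hρs : ρ * s = s * ρ := by
    refine LinearMap.ext fun x => ?_
    change contractL (regChar R A) (comul (R := R) (antipode R (antipode R x))) =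
      antipode R (antipode R (contractL (regChar R A) (comul (R := R) x)))
    rw [contractL_comul_antipode, contractR_comul_antipode]
    congr 3
    exact congrArg contractL hχ
  let P : Module.End R A := n⁻¹ • (s * ρ)
  have hT : (s * ρ) * ((s * ρ) * (s * ρ)) = n • n • (s * ρ) := by
    have h1 : (s * ρ) * (s * ρ) = n • ρ := by
      rw [mul_assoc, ← mul_assoc ρ, hρs, mul_assoc, ← mul_assoc s, hss, one_mul, hρρ]
    rw [h1, mul_smul_comm, mul_assoc, hρρ, mul_smul_comm]
  have hP : P * (P * P) = P := by
    simp only [P, smul_mul_smul_comm, hT, smul_smul]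
    congr 1
    field_simp
  obtain ⟨a, b, htr, htr2, ha, hb⟩ := exists_trace_eq_of_pow_three s (by rw [hss, mul_one])
  obtain ⟨a', b', htr', -⟩ := exists_trace_eq_of_pow_three P hP
  have hs1 : LinearMap.trace R A s = l 1 := by
    rw [← hΛ.trace_antipode_sq_mul hl 1]
    congr 1
    ext x
    simp [s]
  have hP1 : LinearMap.trace R A P = n⁻¹ * l 1 := by
    rw [map_smul, smul_eq_mul]
    congr 1
    exact hΛ.trace_antipode_sq_comp_contractL hl
  have hab : ((a : ℤ) + b) = (Module.finrank R A : ℤ) := by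
    have : (a : R) + b = n := by rw [← htr2, hss, LinearMap.trace_one]
    rw [hn] at this
    exact_mod_cast this
  have hab' : ((a : ℤ) - b) = ((a : ℤ) + b) * ((a' : ℤ) - b') := by
    have : (a : R) - b = n * ((a' : R) - b') := by
      rw [← htr, hs1, ← htr', hP1, ← mul_assoc, mul_inv_cancel₀ hn0, one_mul]
    rw [hab]
    rw [hn] at this
    exact_mod_cast this
  have hne : ((a : ℤ) - b) ≠ 0 := by
    intro h
    apply hΛ.apply_one_ne_zero hl
    rw [← hs1, htr]
    exact_mod_cast h
  have hcases : a = 0 ∨ b = 0 := by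
    by_contra! hcon
    have ha0 : 0 < (a : ℤ) := by exact_mod_cast Nat.pos_of_ne_zero hcon.1
    have hb0 : 0 < (b : ℤ) := by exact_mod_cast Nat.pos_of_ne_zero hcon.2
    rcases lt_trichotomy ((a' : ℤ) - b') 0 with h | h | h
    · nlinarith
    · rw [h, mul_zero] at hab'
      exact hne hab'
    · nlinarith
  rcases hcases with h | h
  · have h1 := LinearMap.congr_fun (ha h) 1
    rw [hss] at h1
    have h2 : (1 : A) = -1 := by simpa [s] using h1
    have h3 := congrArg (counit (R := R)) h2
    rw [map_neg, Bialgebra.counit_one] at h3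
    exact absurd h3 (by norm_num)
  · have h1 := LinearMap.congr_fun (hb h) x
    rw [hss] at h1
    exact h1.symm

end IsNormalizedIntegral

/-- A two-sided cointegral on `A`, with the symmetry properties it has when `A` is semisimple. -/
structure IsHaar (l : A →ₗ[R] R) : Prop where
  contractL_comul : ∀ x, contractL l (comul (R := R) x) = l x • 1
  contractR_comul : ∀ x, contractR l (comul (R := R) x) = l x • 1
  apply_mul_comm : ∀ x y, l (x * y) = l (y * x)
  apply_antipode : ∀ x, l (antipode R x) = l x
  apply_one_ne_zero : l 1 ≠ 0
  eq_zero_of_forall_mul : ∀ x, (∀ y, l (y * x) = 0) → x = 0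
  antipode_antipode : ∀ x : A, antipode R (antipode R x) = x

theorem exists_isHaar [CharZero R] [IsAlgClosed R] [IsSemisimpleRing A] :
    ∃ l : A →ₗ[R] R, IsHaar l := by
  obtain ⟨Λ, hΛ⟩ := exists_isNormalizedIntegral (R := R) (A := A)
  obtain ⟨l, hl⟩ := hΛ.exists_contractL_eq_one
  have hR : ∀ x, contractR l (comul (R := R) x) = l x • 1 := fun x => by
    rw [hΛ.contractR_comul hl, hΛ.contractR_eq_one hl]
  have h1 := hΛ.apply_one_ne_zero hl
  refine ⟨l, hΛ.contractL_comul hl, hR, fun x y => ?_, fun x => ?_, h1,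
    fun x hx => hΛ.eq_zero_of_forall_mul hl hx, hΛ.antipode_antipode hl⟩
  · rw [← hΛ.nakayama hl, hΛ.antipode_antipode hl]
  · have e1 : contractR (l ∘ₗ antipode R) (comul (R := R) x) = l (antipode R x) • 1 := by
      apply hΛ.antipode_injective
      rw [← contractL_comul_antipode, hΛ.contractL_comul hl, map_smul, antipode_one]
    have e2 := apply_contractL l (l ∘ₗ antipode R) (comul (R := R) x)
    rw [e1, hΛ.contractL_comul hl, map_smul, map_smul, LinearMap.comp_apply, antipode_one,
      smul_eq_mul, smul_eq_mul] at e2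
    exact (mul_right_cancel₀ h1 e2).symm

end AntipodeSquared

section Subcoalgebra

open Coalgebra HopfAlgebra

variable {R : Type} [Field R] {A : Type} [Ring A] [HopfAlgebra R A]

lemma IsSubcoalgebra.contractL_mem {X : Submodule R A} (hX : IsSubcoalgebra R A X) {x : A}
    (hx : x ∈ X) (f : A →ₗ[R] R) : contractL f (comul (R := R) x) ∈ X := by
  obtain ⟨t, ht⟩ := hX x hx
  rw [← ht]
  clear ht
  induction t with
  | zero => simp
  | add s t hs ht => simpa using add_mem hs ht
  | tmul a b => simpa using X.smul_mem _ b.2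

lemma IsSubcoalgebra.contractR_mem {X : Submodule R A} (hX : IsSubcoalgebra R A X) {x : A}
    (hx : x ∈ X) (f : A →ₗ[R] R) : contractR f (comul (R := R) x) ∈ X := by
  obtain ⟨t, ht⟩ := hX x hx
  rw [← ht]
  clear ht
  induction t with
  | zero => simp
  | add s t hs ht => simpa using add_mem hs ht
  | tmul a b => simpa using X.smul_mem _ a.2

lemma contractL_eq_zero_of_range {X : Submodule R A} {f : A →ₗ[R] R} (hf : ∀ x ∈ X, f x = 0)
    {t : A ⊗[R] A} (ht : t ∈ LinearMap.range (TensorProduct.map X.subtype X.subtype)) :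
    contractL f t = 0 := by
  obtain ⟨t, rfl⟩ := ht
  induction t with
  | zero => simp
  | add s t hs ht => simp [hs, ht]
  | tmul a b => simp [hf a a.2]

lemma contractR_eq_zero_of_range {X : Submodule R A} {f : A →ₗ[R] R} (hf : ∀ x ∈ X, f x = 0)
    {t : A ⊗[R] A} (ht : t ∈ LinearMap.range (TensorProduct.map X.subtype X.subtype)) :
    contractR f t = 0 := by
  obtain ⟨t, rfl⟩ := ht
  induction t with
  | zero => simp
  | add s t hs ht => simp [hs, ht]
  | tmul a b => simp [hf b b.2]

lemma isSubcoalgebra_of_contract [FiniteDimensional R A] {X : Submodule R A}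
    (hL : ∀ x ∈ X, ∀ f : A →ₗ[R] R, contractL f (comul (R := R) x) ∈ X)
    (hR : ∀ x ∈ X, ∀ f : A →ₗ[R] R, contractR f (comul (R := R) x) ∈ X) :
    IsSubcoalgebra R A X := by
  intro x hx
  obtain ⟨p, hp⟩ := LinearMap.exists_leftInverse_of_injective X.subtype X.ker_subtype
  have hp' : ∀ y ∈ X, X.subtype (p y) = y := fun y hy =>
    congrArg X.subtype (LinearMap.congr_fun hp ⟨y, hy⟩)
  set q : A →ₗ[R] A := X.subtype ∘ₗ p with hq
  set t := comul (R := R) x with ht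
  have cl : ∀ (f : A →ₗ[R] R) (s : A ⊗[R] A), contractL f (q.lTensor A s) = q (contractL f s) := by
    intro f s
    induction s with
    | zero => simp
    | add s t hs ht => simp only [map_add, hs, ht]
    | tmul a b => simp
  have cr : ∀ (f : A →ₗ[R] R) (s : A ⊗[R] A), contractR f (q.rTensor A s) = q (contractR f s) := by
    intro f s
    induction s with
    | zero => simp
    | add s t hs ht => simp only [map_add, hs, ht]
    | tmul a b => simp
  have h1 : q.lTensor A t = t := eq_of_contractL_eq fun f => by
    rw [cl]
    exact hp' _ (hL x hx f)
  have h2 : q.rTensor A t = t := eq_of_contractL_eq fun f =>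
    eq_of_forall_dual_eq (R := R) fun g => by
      rw [apply_contractL, cr, apply_contractL]
      exact congrArg f (hp' _ (hR x hx g))
  refine ⟨TensorProduct.map p p t, ?_⟩
  have h3 : q.rTensor A (q.lTensor A t) = t := by rw [h1, h2]
  have h4 : ∀ s : A ⊗[R] A, TensorProduct.map X.subtype X.subtype (TensorProduct.map p p s) =
      q.rTensor A (q.lTensor A s) := by
    intro s
    induction s with
    | zero => simp
    | add s t hs ht => simp only [map_add, hs, ht]
    | tmul a b => simp [hq]
  exact (h4 t).trans h3

variable [FiniteDimensional R A]

lemma IsSubcoalgebra.inf {X Y : Submodule R A} (hX : IsSubcoalgebra R A X)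
    (hY : IsSubcoalgebra R A Y) : IsSubcoalgebra R A (X ⊓ Y) :=
  isSubcoalgebra_of_contract
    (fun _ hx f => ⟨hX.contractL_mem hx.1 f, hY.contractL_mem hx.2 f⟩)
    (fun _ hx f => ⟨hX.contractR_mem hx.1 f, hY.contractR_mem hx.2 f⟩)

lemma isSubcoalgebra_sSup {S : Set (Submodule R A)} (hS : ∀ X ∈ S, IsSubcoalgebra R A X) :
    IsSubcoalgebra R A (sSup S) := by
  have h : ∀ φ : A →ₗ[R] A, (∀ X ∈ S, ∀ x ∈ X, φ x ∈ X) → ∀ x ∈ sSup S, φ x ∈ sSup S := by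
    intro φ hφ
    have : sSup S ≤ (sSup S).comap φ :=
      sSup_le fun X hX x hx => (le_sSup hX : X ≤ sSup S) (hφ X hX x hx)
    exact this
  exact isSubcoalgebra_of_contract
    (fun x hx f => h (contractL f ∘ₗ comul (R := R))
      (fun X hX x hx => (hS X hX).contractL_mem hx f) x hx)
    (fun x hx f => h (contractR f ∘ₗ comul (R := R))
      (fun X hX x hx => (hS X hX).contractR_mem hx f) x hx)

omit [FiniteDimensional R A] in
lemma IsSubcoalgebra.mul {X Y : Submodule R A} (hX : IsSubcoalgebra R A X)
    (hY : IsSubcoalgebra R A Y) : IsSubcoalgebra R A (X * Y) := by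
  intro z hz
  induction hz using Submodule.mul_induction_on' with
  | add x hx y hy hx' hy' => rw [map_add]; exact add_mem hx' hy'
  | mem_mul_mem x hx y hy =>
    rw [Bialgebra.comul_mul]
    obtain ⟨s, hs⟩ := hX x hx
    obtain ⟨t, ht⟩ := hY y hy
    rw [← hs, ← ht]
    clear hs ht
    induction s with
    | zero => simp
    | add s s' h h' => rw [map_add, add_mul]; exact add_mem h h'
    | tmul a b =>
      induction t with
      | zero => simp
      | add s s' h h' => rw [map_add, mul_add]; exact add_mem h h'
      | tmul c d =>
        exact ⟨⟨a * c, Submodule.mul_mem_mul a.2 c.2⟩ ⊗ₜ ⟨b * d, Submodule.mul_mem_mul b.2 d.2⟩,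
          by simp⟩

omit [FiniteDimensional R A] in
lemma isSubcoalgebra_span_singleton {g : A} (hg : comul (R := R) g = g ⊗ₜ[R] g) :
    IsSubcoalgebra R A (Submodule.span R {g}) := by
  intro x hx
  obtain ⟨a, rfl⟩ := Submodule.mem_span_singleton.1 hx
  rw [map_smul, hg]
  exact Submodule.smul_mem _ _ ⟨⟨g, Submodule.mem_span_singleton_self g⟩ ⊗ₜ
    ⟨g, Submodule.mem_span_singleton_self g⟩, by simp⟩

lemma IsSubcoalgebra.exists_isSimpleSubcoalgebra_le {X : Submodule R A}
    (hX : IsSubcoalgebra R A X) (h0 : X ≠ ⊥) : ∃ D ≤ X, IsSimpleSubcoalgebra R A D := by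
  obtain ⟨D, ⟨hDX, hD, hD0⟩, hmin⟩ := WellFounded.has_min (wellFounded_lt (α := Submodule R A))
    {D | D ≤ X ∧ IsSubcoalgebra R A D ∧ D ≠ ⊥} ⟨X, le_rfl, hX, h0⟩
  refine ⟨D, hDX, hD, hD0, fun E hED hE hE0 => ?_⟩
  by_contra hne
  exact hmin E ⟨hED.trans hDX, hE, hE0⟩ (lt_of_le_of_ne hED hne)

lemma IsSimpleSubcoalgebra.le_of_inf_ne_bot {C X : Submodule R A}
    (hC : IsSimpleSubcoalgebra R A C) (hX : IsSubcoalgebra R A X) (h : C ⊓ X ≠ ⊥) : C ≤ X :=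
  inf_eq_left.1 (hC.2.2 _ inf_le_left (hC.1.inf hX) h)

omit [FiniteDimensional R A] in
lemma contractR_contractR_comul (f g : A →ₗ[R] R) (x : A) :
    contractR (f ∘ₗ contractR g ∘ₗ comul (R := R)) (comul (R := R) x) =
      contractR f (comul (R := R) (contractR g (comul (R := R) x))) := by
  refine eq_of_forall_dual_eq (R := R) fun p => ?_
  rw [← apply_contractL, ← apply_contractL, contractL_contractR_comul]
  rfl

lemma IsSubcoalgebra.exists_isCocomm [CharZero R] {C : Submodule R A}
    (hC : IsSubcoalgebra R A C) (h0 : C ≠ ⊥) :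
    ∃ c ∈ C, IsCocomm R A c ∧ counit (R := R) c ≠ 0 := by
  let ρ : Module.Dual R A →ₗ[R] (C →ₗ[R] C) :=
    { toFun := fun f => (contractR f ∘ₗ comul (R := R)).restrict
        fun x hx => hC.contractR_mem hx f
      map_add' := fun f g => by
        ext x
        simp [LinearMap.restrict_apply, contractR, LinearMap.lTensor_add]
      map_smul' := fun a f => by
        ext x
        simp [LinearMap.restrict_apply, contractR, LinearMap.lTensor_smul] }
  have hρ : ∀ f x, (ρ f x : A) = contractR f (comul (R := R) (x : A)) := fun f x => rfl
  let c : A := (Module.evalEquiv R A).symm (LinearMap.trace R C ∘ₗ ρ)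
  have hc : ∀ f : A →ₗ[R] R, f c = LinearMap.trace R C (ρ f) := fun f => by
    simp only [c, Module.apply_evalEquiv_symm_apply]
    rfl
  refine ⟨c, ?_, ?_, ?_⟩
  · by_contra hcC
    obtain ⟨f, hf, hfC⟩ := Submodule.exists_le_ker_of_notMem hcC
    apply hf
    rw [hc]
    have : ρ f = 0 := by
      ext x
      rw [hρ]
      exact contractR_eq_zero_of_range (fun y hy => hfC hy) (hC x x.2)
    rw [this, map_zero]
  · have hmul : ∀ f g : A →ₗ[R] R, f (contractR g (comul (R := R) c)) =
        LinearMap.trace R C (ρ f * ρ g) := by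
      intro f g
      have h1 : ρ f * ρ g = ρ (f ∘ₗ contractR g ∘ₗ comul (R := R)) := by
        ext x
        rw [Module.End.mul_apply, hρ, hρ, hρ, contractR_contractR_comul]
      rw [h1, ← hc]
      rfl
    refine eq_of_contractL_eq fun f => eq_of_forall_dual_eq (R := R) fun g => ?_
    have h2 : contractL f (TensorProduct.comm R A A (comul (R := R) c)) =
        contractR f (comul (R := R) c) := by
      rw [← contractR_comm, TensorProduct.comm_comm]
    rw [h2, apply_contractL, hmul, hmul, LinearMap.trace_mul_comm]
  · have h1 : ρ (counit (R := R)) = LinearMap.id := by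
      ext x
      rw [hρ, contractR_counit_comul]
      rfl
    rw [hc, h1, LinearMap.trace_id]
    have : 0 < Module.finrank R C := Module.finrank_pos_iff.2
      ((Submodule.nontrivial_iff_ne_bot).2 h0)
    exact_mod_cast this.ne'

end Subcoalgebra

section HaarForm

open Coalgebra HopfAlgebra

variable {R : Type} [Field R] {A : Type} [Ring A] [HopfAlgebra R A]

/-- The bilinear form `(x, y) ↦ l(x S(y))`. -/
def haarForm (l : A →ₗ[R] R) : A →ₗ[R] A →ₗ[R] R :=
  ((LinearMap.mul R A).compr₂ l).compl₂ (antipode R)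

@[simp] lemma haarForm_apply (l : A →ₗ[R] R) (x y : A) :
    haarForm l x y = l (x * antipode R y) := rfl

variable {l : A →ₗ[R] R}

lemma IsHaar.contractR_haarForm (hl : IsHaar l) (x y : A) :
    contractR ((haarForm l).flip y) (comul (R := R) x) =
      contractL (haarForm l x) (comul (R := R) y) := by
  have h1 : (haarForm l).flip y = l ∘ₗ LinearMap.mulRight R (antipode R y) := by
    ext z
    simp
  rw [h1, ← contractR_mul_one_tmul, ← sum_comul_antipode_mul_tmul_one (ℛ R y), Finset.mul_sum,
    map_sum]
  simp only [← mul_assoc, ← Bialgebra.comul_mul, contractR_mul_tmul_one, hl.contractR_comul]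
  conv_rhs => rw [← (ℛ R y).eq]
  simp

lemma IsHaar.contractL_haarForm (hl : IsHaar l) (x y : A) :
    contractL ((haarForm l).flip y) (comul (R := R) x) =
      contractR (haarForm l x) (comul (R := R) y) := by
  have h1 : (haarForm l).flip y = l ∘ₗ LinearMap.mulLeft R (antipode R y) := by
    ext z
    simp [hl.apply_mul_comm z]
  rw [h1, ← contractL_tmul_one_mul, ← sum_one_tmul_mul_comul_antipode (ℛ R y), Finset.sum_mul,
    map_sum]
  simp only [mul_assoc, ← Bialgebra.comul_mul, contractL_one_tmul_mul, hl.contractL_comul]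
  conv_rhs => rw [← (ℛ R y).eq]
  simp [hl.apply_mul_comm x]

lemma IsHaar.haarForm_comm (hl : IsHaar l) (x y : A) : haarForm l x y = haarForm l y x := by
  rw [haarForm_apply, haarForm_apply, ← hl.apply_antipode, antipode_mul_antidistrib,
    hl.antipode_antipode]

lemma IsHaar.haarForm_mul_left (hl : IsHaar l) (x a y : A) :
    haarForm l (x * a) y = haarForm l x (y * antipode R a) := by
  rw [haarForm_apply, haarForm_apply, antipode_mul_antidistrib, hl.antipode_antipode, mul_assoc]

variable [FiniteDimensional R A]

omit [FiniteDimensional R A] in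
/-- A subcoalgebra that is totally isotropic for the Haar form vanishes. -/
lemma IsHaar.eq_bot_of_isotropic (hl : IsHaar l) {Z : Submodule R A} (hZ : IsSubcoalgebra R A Z)
    (h : ∀ x ∈ Z, ∀ y ∈ Z, haarForm l x y = 0) : Z = ⊥ := by
  have hε : ∀ z ∈ Z, counit (R := R) z = 0 := by
    intro z hz
    have h1 := mul_antipode_lTensor_comul_apply (R := R) z
    have h2 : ∀ t ∈ LinearMap.range (TensorProduct.map Z.subtype Z.subtype),
        l (LinearMap.mul' R A ((antipode R).lTensor A t)) = 0 := by
      rintro _ ⟨t, rfl⟩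
      induction t with
      | zero => simp
      | add s t hs ht => simp only [map_add, hs, ht, add_zero]
      | tmul a b => simpa using h a a.2 b b.2
    have h3 := h2 _ (hZ z hz)
    rw [h1, Algebra.algebraMap_eq_smul_one, map_smul, smul_eq_mul] at h3
    exact (mul_eq_zero.1 h3).resolve_right hl.apply_one_ne_zero
  rw [Submodule.eq_bot_iff]
  intro z hz
  rw [← contractL_counit_comul (R := R) z]
  exact contractL_eq_zero_of_range hε (hZ z hz)

/-- The orthogonal of a subspace for the Haar form. -/
def haarPerp (l : A →ₗ[R] R) (X : Submodule R A) : Submodule R A where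
  carrier := {y | ∀ x ∈ X, haarForm l x y = 0}
  add_mem' ha hb x hx := by rw [map_add, ha x hx, hb x hx, add_zero]
  zero_mem' x _ := map_zero _
  smul_mem' c y hy x hx := by rw [map_smul, hy x hx, smul_zero]

lemma IsHaar.isSubcoalgebra_haarPerp (hl : IsHaar l) {X : Submodule R A}
    (hX : IsSubcoalgebra R A X) : IsSubcoalgebra R A (haarPerp l X) := by
  have hy' : ∀ y ∈ haarPerp l X, ∀ x ∈ X, (haarForm l).flip y x = 0 := fun y hy x hx => hy x hx
  refine isSubcoalgebra_of_contract (fun y hy f x hx => ?_) (fun y hy f x hx => ?_)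
  · rw [apply_contractL, ← hl.contractL_haarForm,
      contractL_eq_zero_of_range (hy' y hy) (hX x hx), map_zero]
  · rw [← apply_contractL, ← hl.contractR_haarForm,
      contractR_eq_zero_of_range (hy' y hy) (hX x hx), map_zero]

lemma IsHaar.inf_haarPerp (hl : IsHaar l) {X : Submodule R A} (hX : IsSubcoalgebra R A X) :
    X ⊓ haarPerp l X = ⊥ :=
  hl.eq_bot_of_isotropic (hX.inf (hl.isSubcoalgebra_haarPerp hX)) fun x hx _ hy => hy.2 x hx.1

omit [FiniteDimensional R A] in
lemma IsHaar.haarForm_eq_zero_of_inf_eq_bot (hl : IsHaar l) {X Y : Submodule R A}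
    (hX : IsSubcoalgebra R A X) (hY : IsSubcoalgebra R A Y) (h : X ⊓ Y = ⊥) {x y : A}
    (hx : x ∈ X) (hy : y ∈ Y) : haarForm l x y = 0 := by
  have h1 : contractL (haarForm l x) (comul (R := R) y) ∈ X ⊓ Y :=
    ⟨hl.contractR_haarForm x y ▸ hX.contractR_mem hx _, hY.contractL_mem hy _⟩
  rw [h, Submodule.mem_bot] at h1
  have h2 := apply_contractL (haarForm l x) (counit (R := R)) (comul (R := R) y)
  rw [h1, map_zero, contractR_counit_comul] at h2
  exact h2.symm

lemma IsHaar.eq_zero_of_haarForm_of_mem (hl : IsHaar l) {X : Submodule R A}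
    (hX : IsSubcoalgebra R A X) {x : A} (hx : x ∈ X) (h : ∀ y ∈ X, haarForm l x y = 0) :
    x = 0 := by
  have : x ∈ X ⊓ haarPerp l X := ⟨hx, fun y hy => (hl.haarForm_comm y x).trans (h y hy)⟩
  rwa [hl.inf_haarPerp hX, Submodule.mem_bot] at this

lemma IsHaar.exists_haarForm_eq (hl : IsHaar l) {X : Submodule R A} (hX : IsSubcoalgebra R A X)
    (f : A →ₗ[R] R) : ∃ x ∈ X, ∀ y ∈ X, haarForm l x y = f y := by
  let F : X →ₗ[R] Module.Dual R X := (haarForm l).domRestrict₁₂ X X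
  have hF : Function.Injective F := (injective_iff_map_eq_zero F).2 fun x hx =>
    Subtype.ext (hl.eq_zero_of_haarForm_of_mem hX x.2 fun y hy =>
      LinearMap.congr_fun hx ⟨y, hy⟩)
  obtain ⟨x, hx⟩ := (LinearMap.injective_iff_surjective_of_finrank_eq_finrank
    (Subspace.dual_finrank_eq).symm).1 hF (f ∘ₗ X.subtype)
  exact ⟨x, x.2, fun y hy => LinearMap.congr_fun hx ⟨y, hy⟩⟩

/-- Every element is a sum of elements of simple subcoalgebras. -/
lemma IsHaar.sSup_isSimpleSubcoalgebra (hl : IsHaar l) :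
    sSup {C : Submodule R A | IsSimpleSubcoalgebra R A C} = ⊤ := by
  set X := sSup {C : Submodule R A | IsSimpleSubcoalgebra R A C} with hXdef
  have hX : IsSubcoalgebra R A X := isSubcoalgebra_sSup fun C hC => hC.1
  have hperp : haarPerp l X = ⊥ := by
    by_contra h0
    obtain ⟨D, hD, hDs⟩ :=
      (hl.isSubcoalgebra_haarPerp hX).exists_isSimpleSubcoalgebra_le h0
    have hDX : D ≤ X := le_sSup hDs
    exact hDs.2.1 (le_bot_iff.1 (hl.inf_haarPerp hX ▸ le_inf hDX hD))
  rw [eq_top_iff]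
  intro a _
  obtain ⟨x, hx, hxa⟩ := hl.exists_haarForm_eq hX (haarForm l a)
  have : x - a ∈ haarPerp l X := fun y hy => by
    rw [hl.haarForm_comm, map_sub, LinearMap.sub_apply, hxa y hy, sub_self]
  rw [hperp, Submodule.mem_bot, sub_eq_zero] at this
  exact this ▸ hx

section Coset

variable {K : Subalgebra R A} {C D : Submodule R A}

omit [FiniteDimensional R A] in
lemma mul_toSubmodule_mul_toSubmodule (X : Submodule R A) :
    X * K.toSubmodule * K.toSubmodule = X * K.toSubmodule := by
  rw [mul_assoc, K.isIdempotentElem_toSubmodule.eq]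

omit [FiniteDimensional R A] in
lemma le_mul_toSubmodule (X : Submodule R A) : X ≤ X * K.toSubmodule := fun x hx => by
  simpa using Submodule.mul_mem_mul hx (show (1 : A) ∈ K.toSubmodule from one_mem K)

lemma IsHaar.mul_toSubmodule_le (hl : IsHaar l) (hK : IsHopfSubalgebra R A K)
    (hC : IsSimpleSubcoalgebra R A C) {X : Submodule R A} (hX : IsSubcoalgebra R A X)
    (h : C * K.toSubmodule ⊓ X * K.toSubmodule ≠ ⊥) :
    C * K.toSubmodule ≤ X * K.toSubmodule := by
  have hXK : IsSubcoalgebra R A (X * K.toSubmodule) := hX.mul hK.1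
  suffices C ≤ X * K.toSubmodule from
    (mul_le_mul' this le_rfl).trans (mul_toSubmodule_mul_toSubmodule X).le
  refine hC.le_of_inf_ne_bot hXK fun h0 => h ?_
  rw [eq_bot_iff]
  intro z hz
  refine (Submodule.mem_bot R).2 (hl.eq_zero_of_haarForm_of_mem ((hC.1.mul hK.1).inf hXK) hz ?_)
  have key : ∀ w ∈ C * K.toSubmodule, ∀ y ∈ X * K.toSubmodule, haarForm l w y = 0 := by
    intro w hw y hy
    induction hw using Submodule.mul_induction_on' with
    | add u _ v _ hu hv => rw [map_add, LinearMap.add_apply, hu, hv, add_zero]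
    | mem_mul_mem c hc a ha =>
      rw [hl.haarForm_mul_left]
      refine hl.haarForm_eq_zero_of_inf_eq_bot hC.1 hXK h0 hc ?_
      rw [← mul_toSubmodule_mul_toSubmodule]
      exact Submodule.mul_mem_mul hy (hK.2 a ha)
  exact fun y hy => key z hz.1 y hy.2

lemma IsHaar.mul_toSubmodule_eq (hl : IsHaar l) (hK : IsHopfSubalgebra R A K)
    (hC : IsSimpleSubcoalgebra R A C) (hD : IsSimpleSubcoalgebra R A D)
    (h : C * K.toSubmodule ⊓ D * K.toSubmodule ≠ ⊥) :
    C * K.toSubmodule = D * K.toSubmodule :=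
  le_antisymm (hl.mul_toSubmodule_le hK hC hD.1 h)
    (hl.mul_toSubmodule_le hK hD hC.1 (inf_comm (C * K.toSubmodule) _ ▸ h))

end Coset

end HaarForm

section Cocommutative

open Coalgebra HopfAlgebra

variable {R : Type} [Field R] {A : Type} [Ring A] [HopfAlgebra R A]

lemma IsCocomm.contractL_eq_contractR {x : A} (hx : IsCocomm R A x) (f : A →ₗ[R] R) :
    contractL f (comul (R := R) x) = contractR f (comul (R := R) x) := by
  rw [← contractR_comm, hx]

lemma isCocomm_of_contract [FiniteDimensional R A] {x : A}
    (h : ∀ f : A →ₗ[R] R, contractL f (comul (R := R) x) = contractR f (comul (R := R) x)) :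
    IsCocomm R A x :=
  eq_of_contractL_eq fun f => by
    rw [← contractR_comm, TensorProduct.comm_comm, h]

lemma IsCocomm.mul {x y : A} (hx : IsCocomm R A x) (hy : IsCocomm R A y) :
    IsCocomm R A (x * y) := by
  have h := map_mul (Algebra.TensorProduct.comm R A A) (comul (R := R) x) (comul (R := R) y)
  have hx' : Algebra.TensorProduct.comm R A A (comul (R := R) x) = comul (R := R) x := hx
  have hy' : Algebra.TensorProduct.comm R A A (comul (R := R) y) = comul (R := R) y := hy
  rw [hx', hy', ← Bialgebra.comul_mul] at h
  exact h

lemma IsCocomm.sub {x y : A} (hx : IsCocomm R A x) (hy : IsCocomm R A y) :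
    IsCocomm R A (x - y) := by
  rw [IsCocomm] at *
  rw [map_sub, map_sub, hx, hy]

lemma isCocomm_of_comul_eq {g : A} (hg : comul (R := R) g = g ⊗ₜ[R] g) : IsCocomm R A g := by
  rw [IsCocomm, hg, TensorProduct.comm_tmul]

variable [FiniteDimensional R A] {l : A →ₗ[R] R} {K : Subalgebra R A} {C : Submodule R A}

omit [FiniteDimensional R A] in
lemma IsHopfSubalgebra.exists_repr (hK : IsHopfSubalgebra R A K) {h : A} (hh : h ∈ K) :
    ∃ 𝓡 : Repr R h (K.toSubmodule × K.toSubmodule),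
      ∀ i ∈ 𝓡.index, 𝓡.left i ∈ K ∧ 𝓡.right i ∈ K := by
  obtain ⟨t, ht⟩ := hK.1 h hh
  obtain ⟨S, rfl⟩ := TensorProduct.exists_finset t
  exact ⟨⟨S, fun i => i.1, fun i => i.2, by simpa using ht⟩, fun i _ => ⟨i.1.2, i.2.2⟩⟩

/-- The integral of a Hopf subalgebra is cocommutative. -/
lemma IsHaar.isCocomm_integral (hl : IsHaar l) (hK : IsHopfSubalgebra R A K) {Λ : A}
    (hΛ : IsIdempotentIntegral R A K Λ) : IsCocomm R A Λ := by
  refine isCocomm_of_contract fun f => ?_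
  obtain ⟨x, hx, hxf⟩ := hl.exists_haarForm_eq hK.1 (f ∘ₗ antipode R)
  have hx' : antipode R (antipode R x) = x := hl.antipode_antipode x
  obtain ⟨𝓡, h𝓡⟩ := hK.exists_repr (hK.2 x hx)
  have hf : ∀ y ∈ K.toSubmodule, (f - l ∘ₗ LinearMap.mulLeft R x) y = 0 := by
    intro y hy
    have := hxf _ (hK.2 y hy)
    rw [haarForm_apply, LinearMap.comp_apply, hl.antipode_antipode] at this
    rw [LinearMap.sub_apply, LinearMap.comp_apply, LinearMap.mulLeft_apply, this, sub_self]
  have hL : contractL f (comul (R := R) Λ) =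
      contractL (l ∘ₗ LinearMap.mulLeft R x) (comul (R := R) Λ) := by
    have := contractL_eq_zero_of_range hf (hK.1 Λ hΛ.1)
    rwa [contractL, LinearMap.rTensor_sub, LinearMap.comp_sub, LinearMap.sub_apply,
      sub_eq_zero] at this
  have hR : contractR f (comul (R := R) Λ) =
      contractR (l ∘ₗ LinearMap.mulLeft R x) (comul (R := R) Λ) := by
    have := contractR_eq_zero_of_range hf (hK.1 Λ hΛ.1)
    rwa [contractR, LinearMap.lTensor_sub, LinearMap.comp_sub, LinearMap.sub_apply,
      sub_eq_zero] at this
  have hcomm : l ∘ₗ LinearMap.mulLeft R x = l ∘ₗ LinearMap.mulRight R x :=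
    LinearMap.ext fun y => hl.apply_mul_comm x y
  have e1 := antipode_tmul_one_mul_comul 𝓡 fun i hi => (hΛ.2.2 _ (h𝓡 i hi).2).1
  have e2 := comul_mul_tmul_one 𝓡 fun i hi => (hΛ.2.2 _ (h𝓡 i hi).1).2
  rw [hx'] at e1 e2
  rw [hL, hR, ← contractL_tmul_one_mul, e1, contractL_one_tmul_mul, hl.contractL_comul, hcomm,
    ← contractR_mul_one_tmul, ← e2, contractR_mul_tmul_one, hl.contractR_comul]
  simp

lemma IsHaar.exists_haarForm_eq_mul_counit [IsAlgClosed R] (hl : IsHaar l)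
    (hC : IsSimpleSubcoalgebra R A C) {x : A} (hx : IsCocomm R A x) :
    ∃ t : R, ∀ y ∈ C, haarForm l x y = t * counit (R := R) y := by
  have hT : ∀ y, contractR (haarForm l x) (comul (R := R) y) =
      contractL (haarForm l x) (comul (R := R) y) := fun y => by
    rw [← hl.contractL_haarForm, ← hl.contractR_haarForm, hx.contractL_eq_contractR]
  let T : A →ₗ[R] A := contractL (haarForm l x) ∘ₗ comul (R := R)
  have hTC : ∀ y ∈ C, T y ∈ C := fun y hy => hC.1.contractL_mem hy _
  have : Nontrivial C := (Submodule.nontrivial_iff_ne_bot).2 hC.2.1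
  obtain ⟨t, ht⟩ := Module.End.exists_eigenvalue (T.restrict hTC)
  obtain ⟨v, hv⟩ := ht.exists_hasEigenvector
  have hv1 : T v = t • (v : A) := congrArg Subtype.val hv.apply_eq_smul
  let E : Submodule R A := C ⊓ LinearMap.ker (T - t • LinearMap.id)
  have memE : ∀ y, y ∈ E ↔ y ∈ C ∧ contractL (haarForm l x) (comul (R := R) y) = t • y := by
    intro y
    rw [Submodule.mem_inf, LinearMap.mem_ker, LinearMap.sub_apply, sub_eq_zero]
    rfl
  have hE : IsSubcoalgebra R A E := by
    refine isSubcoalgebra_of_contract (fun y hy f => ?_) (fun y hy f => ?_)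
    · rw [memE] at hy ⊢
      refine ⟨hC.1.contractL_mem hy.1 f, ?_⟩
      rw [← hT, ← contractL_contractR_comul, hT, hy.2, map_smul, map_smul]
    · rw [memE] at hy ⊢
      refine ⟨hC.1.contractR_mem hy.1 f, ?_⟩
      rw [contractL_contractR_comul, hy.2, map_smul, map_smul]
  have hEC : E = C := hC.2.2 E inf_le_left hE fun h0 => hv.2 (Subtype.ext
    ((Submodule.mem_bot R).1 (h0 ▸ (memE v).2 ⟨v.2, hv1⟩)))
  refine ⟨t, fun y hy => ?_⟩
  have h1 := ((memE y).1 (hEC ▸ hy)).2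
  have h2 := apply_contractL (haarForm l x) (counit (R := R)) (comul (R := R) y)
  rw [h1, contractR_counit_comul, map_smul, smul_eq_mul] at h2
  exact h2.symm

lemma IsHaar.exists_haarForm_eq_mul_counit_coset [IsAlgClosed R] (hl : IsHaar l)
    (hK : IsHopfSubalgebra R A K) (hC : IsSimpleSubcoalgebra R A C) {x : A}
    (hx : IsCocomm R A x) (hxK : ∀ a ∈ K, x * a = counit (R := R) a • x) :
    ∃ t : R, ∀ y ∈ C * K.toSubmodule, haarForm l x y = t * counit (R := R) y := by
  obtain ⟨t, ht⟩ := hl.exists_haarForm_eq_mul_counit hC hx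
  refine ⟨t, fun y hy => ?_⟩
  induction hy using Submodule.mul_induction_on' with
  | add u _ v _ hu hv => rw [map_add, map_add, hu, hv, mul_add]
  | mem_mul_mem c hc a ha =>
    rw [hl.haarForm_comm, hl.haarForm_mul_left, hxK _ (hK.2 a ha), map_smul, hl.haarForm_comm,
      ht c hc, Bialgebra.counit_mul, counit_antipode, smul_eq_mul]
    ring

/-- A `K`-invariant cocommutative element of a coset `CK` is determined by its counit. -/
lemma IsHaar.eq_zero_of_isCocomm_of_counit_eq_zero [CharZero R] [IsAlgClosed R] (hl : IsHaar l)
    (hK : IsHopfSubalgebra R A K) {Λ : A} (hΛ : IsIdempotentIntegral R A K Λ)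
    (hC : IsSimpleSubcoalgebra R A C) {z : A} (hzC : z ∈ C * K.toSubmodule)
    (hz : IsCocomm R A z) (hzK : ∀ a ∈ K, z * a = counit (R := R) a • z)
    (hz0 : counit (R := R) z = 0) : z = 0 := by
  obtain ⟨c, hcC, hc, hc0⟩ := hC.1.exists_isCocomm hC.2.1
  have hCK := hC.1.mul hK.1
  have hu : c * Λ ∈ C * K.toSubmodule := Submodule.mul_mem_mul hcC hΛ.1
  obtain ⟨t, ht⟩ := hl.exists_haarForm_eq_mul_counit_coset hK hC hz hzK
  obtain ⟨s, hs⟩ := hl.exists_haarForm_eq_mul_counit_coset hK hC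
    (hc.mul (hl.isCocomm_integral hK hΛ)) fun a ha => by
      rw [mul_assoc, (hΛ.2.2 a ha).2, mul_smul_comm]
  have hw : s • z - t • (c * Λ) = 0 :=
    hl.eq_zero_of_haarForm_of_mem hCK
      (sub_mem (Submodule.smul_mem _ _ hzC) (Submodule.smul_mem _ _ hu)) fun y hy => by
        rw [map_sub, map_smul, map_smul, LinearMap.sub_apply, LinearMap.smul_apply,
          LinearMap.smul_apply, ht y hy, hs y hy, smul_eq_mul, smul_eq_mul]
        ring
  have ht0 : t = 0 := by
    have := congrArg (counit (R := R)) hw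
    rw [map_sub, map_smul, map_smul, hz0, Bialgebra.counit_mul, hΛ.2.1, smul_zero, map_zero,
      mul_one, zero_sub, neg_eq_zero, smul_eq_mul] at this
    exact (mul_eq_zero.1 this).resolve_right hc0
  exact hl.eq_zero_of_haarForm_of_mem hCK hzC fun y hy => by rw [ht y hy, ht0, zero_mul]

end Cocommutative

section GroupLike

open Coalgebra HopfAlgebra

variable {R : Type} [Field R] {A : Type} [Ring A] [HopfAlgebra R A] {l : A →ₗ[R] R}
  {K : Subalgebra R A} {C : Submodule R A} {G : Set A}

lemma counit_eq_one_of_comul_eq {g : A} (h0 : g ≠ 0) (hg : comul (R := R) g = g ⊗ₜ[R] g) :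
    counit (R := R) g = 1 := by
  have h := contractL_counit_comul (R := R) g
  rw [hg, contractL_tmul] at h
  have h2 : (counit (R := R) g - 1) • g = 0 := by rw [sub_smul, h, one_smul, sub_self]
  exact sub_eq_zero.1 ((smul_eq_zero.1 h2).resolve_right h0)

lemma IsGrouplikeSubgroup.counit_eq_one (hG : IsGrouplikeSubgroup R A G) {g : A} (hg : g ∈ G) :
    counit (R := R) g = 1 :=
  counit_eq_one_of_comul_eq (hG.2.1 g hg).1 (hG.2.1 g hg).2

lemma haarForm_self_of_comul_eq {g : A} (h0 : g ≠ 0) (hg : comul (R := R) g = g ⊗ₜ[R] g) :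
    haarForm l g g = l 1 := by
  have h := mul_antipode_lTensor_comul_apply (R := R) g
  rw [hg, LinearMap.lTensor_tmul, LinearMap.mul'_apply, counit_eq_one_of_comul_eq h0 hg,
    map_one] at h
  rw [haarForm_apply, h]

lemma mem_of_span_singleton_inf_ne_bot {g : A} {D : Submodule R A}
    (h : Submodule.span R {g} ⊓ D ≠ ⊥) : g ∈ D := by
  obtain ⟨x, hx, hx0⟩ := Submodule.exists_mem_ne_zero_of_ne_bot h
  obtain ⟨a, rfl⟩ := Submodule.mem_span_singleton.1 hx.1
  have ha : a ≠ 0 := fun h => hx0 (by rw [h, zero_smul])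
  exact (D.smul_mem_iff ha).1 hx.2

lemma IsHaar.haarForm_eq_zero_of_ne (hl : IsHaar l) (hG : IsGrouplikeSubgroup R A G) {g h : A}
    (hg : g ∈ G) (hh : h ∈ G) (hne : g ≠ h) : haarForm l g h = 0 := by
  refine hl.haarForm_eq_zero_of_inf_eq_bot (isSubcoalgebra_span_singleton (hG.2.1 g hg).2)
    (isSubcoalgebra_span_singleton (hG.2.1 h hh).2) ?_
    (Submodule.mem_span_singleton_self g) (Submodule.mem_span_singleton_self h)
  by_contra h0
  obtain ⟨a, ha⟩ := Submodule.mem_span_singleton.1 (mem_of_span_singleton_inf_ne_bot h0)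
  have := congrArg (counit (R := R)) ha
  rw [map_smul, hG.counit_eq_one hg, hG.counit_eq_one hh, smul_eq_mul, mul_one] at this
  exact hne (by rw [← ha, this, one_smul])

lemma span_singleton_mul_span_singleton_mul {g h : A} (hgh : g * h = 1) (X : Submodule R A) :
    Submodule.span R {g} * (Submodule.span R {h} * X) = X := by
  rw [← mul_assoc, Submodule.span_mul_span, Set.singleton_mul_singleton, hgh,
    ← Submodule.one_eq_span, one_mul]

lemma IsGrouplikeSubgroup.isSimpleSubcoalgebra_mul (hG : IsGrouplikeSubgroup R A G) {g : A}
    (hg : g ∈ G) (hC : IsSimpleSubcoalgebra R A C) :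
    IsSimpleSubcoalgebra R A (Submodule.span R {g} * C) := by
  obtain ⟨g', hg', h1, h2⟩ := hG.2.2.2 g hg
  refine ⟨(isSubcoalgebra_span_singleton (hG.2.1 g hg).2).mul hC.1, fun h0 => hC.2.1 ?_,
    fun D hD hDs hD0 => ?_⟩
  · rw [← span_singleton_mul_span_singleton_mul h2 C, h0, Submodule.mul_bot]
  · have h3 : Submodule.span R {g'} * D = C := by
      refine hC.2.2 _ ?_ ((isSubcoalgebra_span_singleton (hG.2.1 g' hg').2).mul hDs)
        fun h0 => hD0 ?_
      · conv_rhs => rw [← span_singleton_mul_span_singleton_mul h2 C]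
        exact mul_le_mul' le_rfl hD
      · rw [← span_singleton_mul_span_singleton_mul h1 D, h0, Submodule.mul_bot]
    rw [← h3, span_singleton_mul_span_singleton_mul h1]

lemma IsGrouplikeSubgroup.toSubmodule_adjoin (hG : IsGrouplikeSubgroup R A G) :
    (Algebra.adjoin R G).toSubmodule = Submodule.span R G := by
  let N : Submonoid A :=
    { carrier := G
      one_mem' := hG.1
      mul_mem' := fun {a b} ha hb => hG.2.2.1 a ha b hb }
  have hN : Submonoid.closure G = N := Submonoid.closure_eq N
  rw [Algebra.adjoin_eq_span, hN]
  rfl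

variable [FiniteDimensional R A]

lemma IsHaar.mem_conjK [CharZero R] [IsAlgClosed R] (hl : IsHaar l)
    (hG : IsGrouplikeSubgroup R A G)
    (hK : IsHopfSubalgebra R A K) {Λ : A} (hΛ : IsIdempotentIntegral R A K Λ)
    (hC : IsSimpleSubcoalgebra R A C) {g : A} (hg : g ∈ G)
    (hgC : Submodule.span R {g} * CKsub R A K C = CKsub R A K C) :
    g ∈ conjK R A K Λ C := by
  have hgs := hG.2.1 g hg
  have hg1 := hG.counit_eq_one hg
  have key : ∀ c ∈ C, IsCocomm R A c → g * (c * Λ) = c * Λ := by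
    intro c hcC hc
    have hcΛ : c * Λ ∈ C * K.toSubmodule := Submodule.mul_mem_mul hcC hΛ.1
    have hco := hc.mul (hl.isCocomm_integral hK hΛ)
    refine sub_eq_zero.1 (hl.eq_zero_of_isCocomm_of_counit_eq_zero hK hΛ hC
      (sub_mem ?_ hcΛ) (((isCocomm_of_comul_eq hgs.2).mul hco).sub hco) ?_ ?_)
    · change _ ∈ CKsub R A K C
      rw [← hgC]
      exact Submodule.mul_mem_mul (Submodule.mem_span_singleton_self g) hcΛ
    · intro a ha
      rw [sub_mul, mul_assoc, mul_assoc, (hΛ.2.2 a ha).2]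
      simp only [mul_smul_comm, smul_sub]
    · rw [map_sub, Bialgebra.counit_mul, hg1, one_mul, sub_self]
  refine (le_sSup (a := Submodule.span R {g}) ⟨⟨isSubcoalgebra_span_singleton hgs.2, ?_, ?_⟩,
    ?_⟩ : Submodule.span R {g} ≤ conjK R A K Λ C) (Submodule.mem_span_singleton_self g)
  · rw [Ne, Submodule.span_singleton_eq_bot]
    exact hgs.1
  · intro D hD _ hD0
    refine le_antisymm hD ?_
    rw [Submodule.span_singleton_le_iff_mem]
    exact mem_of_span_singleton_inf_ne_bot (by rwa [inf_eq_right.2 hD])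
  · intro d hd _ c hcC hc
    obtain ⟨a, rfl⟩ := Submodule.mem_span_singleton.1 hd
    rw [smul_mul_assoc, key c hcC hc, map_smul, hg1, smul_eq_mul, mul_one]

lemma IsHaar.span_singleton_mul_eq_of_mem_conjK [CharZero R] (hl : IsHaar l)
    (hG : IsGrouplikeSubgroup R A G)
    (hK : IsHopfSubalgebra R A K) {Λ : A} (hΛ : IsIdempotentIntegral R A K Λ)
    (hC : IsSimpleSubcoalgebra R A C) {g : A} (hg : g ∈ G) (hgC : g ∈ conjK R A K Λ C) :
    Submodule.span R {g} * CKsub R A K C = CKsub R A K C := by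
  have hgs := hG.2.1 g hg
  have hg1 := hG.counit_eq_one hg
  obtain ⟨D, ⟨hD, hDc⟩, hgD⟩ : ∃ D ∈ {D : Submodule R A | IsSimpleSubcoalgebra R A D ∧
      ∀ d ∈ D, IsCocomm R A d → ∀ c ∈ C, IsCocomm R A c →
        d * (c * Λ) = Coalgebra.counit (R := R) d • (c * Λ)}, g ∈ D := by
    by_contra! hne
    have hle : conjK R A K Λ C ≤ LinearMap.ker (haarForm l g) := by
      refine sSup_le fun D hD x hx => ?_
      refine hl.haarForm_eq_zero_of_inf_eq_bot (isSubcoalgebra_span_singleton hgs.2) hD.1.1 ?_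
        (Submodule.mem_span_singleton_self g) hx
      by_contra h0
      exact hne D hD (mem_of_span_singleton_inf_ne_bot h0)
    have := hle hgC
    rw [LinearMap.mem_ker, haarForm_self_of_comul_eq hgs.1 hgs.2] at this
    exact hl.apply_one_ne_zero this
  obtain ⟨c, hcC, hc, hc0⟩ := hC.1.exists_isCocomm hC.2.1
  have hcΛ : c * Λ ∈ C * K.toSubmodule := Submodule.mul_mem_mul hcC hΛ.1
  have hgc := hDc g hgD (isCocomm_of_comul_eq hgs.2) c hcC hc
  rw [hg1, one_smul] at hgc
  rw [CKsub, ← mul_assoc]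
  refine hl.mul_toSubmodule_eq hK (hG.isSimpleSubcoalgebra_mul hg hC) hC fun h0 => hc0 ?_
  have hmem : c * Λ ∈ Submodule.span R {g} * C * K.toSubmodule ⊓ C * K.toSubmodule := by
    refine ⟨?_, hcΛ⟩
    rw [← hgc, mul_assoc]
    exact Submodule.mul_mem_mul (Submodule.mem_span_singleton_self g) hcΛ
  rw [h0, Submodule.mem_bot] at hmem
  have := congrArg (counit (R := R)) hmem
  rwa [Bialgebra.counit_mul, hΛ.2.1, mul_one, map_zero] at this

theorem IsHaar.adjoin_inf_conjK [CharZero R] [IsAlgClosed R] (hl : IsHaar l)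
    (hG : IsGrouplikeSubgroup R A G)
    (hK : IsHopfSubalgebra R A K) {Λ : A} (hΛ : IsIdempotentIntegral R A K Λ)
    (hC : IsSimpleSubcoalgebra R A C) :
    (Algebra.adjoin R G).toSubmodule ⊓ conjK R A K Λ C =
      Submodule.span R {g : A | g ∈ G ∧
        Submodule.span R {g} * CKsub R A K C = CKsub R A K C} := by
  refine le_antisymm ?_ (Submodule.span_le.2 fun g hg =>
    ⟨Algebra.subset_adjoin hg.1, hl.mem_conjK hG hK hΛ hC hg.1 hg.2⟩)
  rintro x ⟨hx, hxC⟩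
  have hco : IsSubcoalgebra R A (conjK R A K Λ C) := isSubcoalgebra_sSup fun D hD => hD.1.1
  rw [hG.toSubmodule_adjoin] at hx
  obtain ⟨c, hcG, rfl⟩ := Submodule.mem_span_set.1 hx
  refine sum_mem fun g hg => Submodule.smul_mem _ _ (Submodule.subset_span ⟨hcG hg, ?_⟩)
  refine hl.span_singleton_mul_eq_of_mem_conjK hG hK hΛ hC (hcG hg) ?_
  have h1 := hco.contractL_mem hxC (haarForm l g)
  have h2 : contractL (haarForm l g) (comul (R := R) (c.sum fun m r => r • m)) =
      (c g * l 1) • g := by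
    rw [Finsupp.sum, map_sum, map_sum, Finset.sum_eq_single g]
    · rw [map_smul, map_smul, (hG.2.1 g (hcG hg)).2, contractL_tmul,
        haarForm_self_of_comul_eq (hG.2.1 g (hcG hg)).1 (hG.2.1 g (hcG hg)).2, smul_smul]
    · intro h hh hne
      rw [map_smul, map_smul, (hG.2.1 h (hcG hh)).2, contractL_tmul,
        hl.haarForm_eq_zero_of_ne hG (hcG hg) (hcG hh) hne.symm, zero_smul, smul_zero]
    · exact fun h => absurd hg h
  rw [h2] at h1
  exact (Submodule.smul_mem_iff _ (mul_ne_zero (Finsupp.mem_support_iff.1 hg)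
    hl.apply_one_ne_zero)).1 h1

end GroupLike

section CosetDecomposition

variable {R : Type} [Field R] {A : Type} [Ring A] [HopfAlgebra R A] {l : A →ₗ[R] R}
  {K : Subalgebra R A} {G : Set A} {ι : Type} {rep : ι → Submodule R A}

/-- A right coset `CK` of a simple subcoalgebra `C`. -/
def IsCoset (K : Subalgebra R A) (W : Submodule R A) : Prop :=
  ∃ C : Submodule R A, IsSimpleSubcoalgebra R A C ∧ W = C * K.toSubmodule

lemma IsGrouplikeSubgroup.isCoset (hG : IsGrouplikeSubgroup R A G) {g : A} (hg : g ∈ G)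
    {C : Submodule R A} (hC : IsSimpleSubcoalgebra R A C) :
    IsCoset K (Submodule.span R {g} * CKsub R A K C) :=
  ⟨_, hG.isSimpleSubcoalgebra_mul hg hC, by rw [CKsub, mul_assoc]⟩

lemma mul_mem_CKsub {C : Submodule R A} {x a : A} (hx : x ∈ CKsub R A K C) (ha : a ∈ K) :
    x * a ∈ CKsub R A K C := by
  rw [CKsub, ← mul_toSubmodule_mul_toSubmodule]
  exact Submodule.mul_mem_mul hx ha

lemma IsGrouplikeSubgroup.adjoin_mul_span_singleton_mul (hG : IsGrouplikeSubgroup R A G) {g : A}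
    (hg : g ∈ G) (X : Submodule R A) :
    (Algebra.adjoin R G).toSubmodule * (Submodule.span R {g} * X) =
      (Algebra.adjoin R G).toSubmodule * X := by
  have hle : ∀ h ∈ G, ∀ Y : Submodule R A,
      (Algebra.adjoin R G).toSubmodule * (Submodule.span R {h} * Y) ≤
        (Algebra.adjoin R G).toSubmodule * Y := by
    intro h hh Y
    rw [← mul_assoc]
    refine mul_le_mul' ?_ le_rfl
    conv_rhs => rw [← (Algebra.adjoin R G).isIdempotentElem_toSubmodule.eq]
    refine mul_le_mul' le_rfl ?_
    rw [Submodule.span_singleton_le_iff_mem]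
    exact Algebra.subset_adjoin hh
  obtain ⟨g', hg', -, h2⟩ := hG.2.2.2 g hg
  refine le_antisymm (hle g hg X) ?_
  conv_lhs => rw [← span_singleton_mul_span_singleton_mul h2 X]
  exact hle g' hg' _

variable [FiniteDimensional R A]

lemma IsHaar.iSup_coset (hl : IsHaar l) : ⨆ W : {W // IsCoset (R := R) K W}, W.1 = ⊤ := by
  rw [eq_top_iff, ← hl.sSup_isSimpleSubcoalgebra]
  exact sSup_le fun C hC => (le_mul_toSubmodule C).trans
    (le_iSup (fun W : {W // IsCoset (R := R) K W} => W.1) ⟨C * K.toSubmodule, C, hC, rfl⟩)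

lemma IsHaar.haarForm_eq_zero_of_isCoset (hl : IsHaar l) (hK : IsHopfSubalgebra R A K)
    {V W : Submodule R A} (hV : IsCoset K V) (hW : IsCoset K W) (hne : V ≠ W) {x y : A}
    (hx : x ∈ V) (hy : y ∈ W) : haarForm l x y = 0 := by
  obtain ⟨C, hC, rfl⟩ := hV
  obtain ⟨D, hD, rfl⟩ := hW
  refine hl.haarForm_eq_zero_of_inf_eq_bot (hC.1.mul hK.1) (hD.1.mul hK.1) ?_ hx hy
  by_contra h0
  exact hne (hl.mul_toSubmodule_eq hK hC hD h0)

lemma IsHaar.iSupIndep_coset (hl : IsHaar l) (hK : IsHopfSubalgebra R A K) :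
    iSupIndep fun W : {W // IsCoset (R := R) K W} => W.1 := by
  intro W
  rw [Submodule.disjoint_def]
  intro x hx hx'
  have hW : IsSubcoalgebra R A W.1 := by
    obtain ⟨C, hC, h⟩ := W.2
    exact h ▸ hC.1.mul hK.1
  refine hl.eq_zero_of_haarForm_of_mem hW hx fun y hy => ?_
  have hle : ⨆ (V : {W // IsCoset (R := R) K W}) (_ : V ≠ W), V.1 ≤
      LinearMap.ker (haarForm l y) :=
    iSup₂_le fun V hV z hz => hl.haarForm_eq_zero_of_isCoset hK W.2 V.2
      (fun h => hV (Subtype.ext h.symm)) hy hz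
  rw [hl.haarForm_comm]
  exact hle hx'

lemma IsHaar.exists_eq_span_singleton_mul (hl : IsHaar l) (hG : IsGrouplikeSubgroup R A G)
    (hK : IsHopfSubalgebra R A K)
    (hrep : IsDoubleCosetReps R A (Algebra.adjoin R G) K rep) {W : Submodule R A}
    (hW : IsCoset K W) :
    ∃ i, ∃ g ∈ G, W = Submodule.span R {g} * CKsub R A K (rep i) := by
  obtain ⟨C, hC, rfl⟩ := id hW
  obtain ⟨i, hi⟩ := hrep.2.2 C hC
  refine ⟨i, ?_⟩
  by_contra! hne
  refine hC.2.1 (hl.eq_bot_of_isotropic hC.1 fun x hx y hy => ?_)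
  have hle : (Algebra.adjoin R G).toSubmodule * (rep i * K.toSubmodule) ≤
      LinearMap.ker (haarForm l x) := by
    refine Submodule.mul_le.2 fun a ha z hz => ?_
    rw [hG.toSubmodule_adjoin] at ha
    rw [LinearMap.mem_ker]
    induction ha using Submodule.span_induction with
    | mem g hg =>
      exact hl.haarForm_eq_zero_of_isCoset hK hW (hG.isCoset hg (hrep.1 i)) (hne g hg)
        (le_mul_toSubmodule C hx)
        (Submodule.mul_mem_mul (Submodule.mem_span_singleton_self g) hz)
    | zero => rw [zero_mul, map_zero]
    | add a b _ _ ha hb => rw [add_mul, map_add, ha, hb, add_zero]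
    | smul r a _ ha => rw [smul_mul_assoc, map_smul, ha, smul_zero]
  exact hle (mul_assoc (Algebra.adjoin R G).toSubmodule _ _ ▸ hi hy)

end CosetDecomposition

section MackeyMap

variable {R : Type} [Field R] {A : Type} [Ring A] [HopfAlgebra R A]
  {L K : Subalgebra R A} {C : Submodule R A}
variable {M : Type v} [AddCommGroup M] [Module R M] [Module K M]

variable (L K C M) in
/-- The map `l ⊗ x ⊗ m ↦ lx ⊗ m` before passing to the quotient by the relations. -/
def preCompToInd : LCM R A L K C M →ₗ[R] Ind R A K M :=
  (indRel R A K M).mkQ.restrictScalars R ∘ₗ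
    (TensorProduct.lift (LinearMap.rTensorHom M ∘ₗ
      (LinearMap.mul R A).compl₁₂ L.val.toLinearMap (CKsub R A K C).subtype) :
        L ⊗[R] (CKsub R A K C ⊗[R] M) →ₗ[R] A ⊗[R] M)

lemma preCompToInd_lcmk (a : L) (x : CKsub R A K C) (m : M) :
    preCompToInd L K C M (lcmk R A L K C M a (ckmk R A K M C x m)) =
      Submodule.Quotient.mk (((a : A) * (x : A)) ⊗ₜ[R] m) := rfl

lemma indMk_mul_tmul (h : A) (a : K) (m : M) :
    (Submodule.Quotient.mk ((h * (a : A)) ⊗ₜ[R] m) : Ind R A K M) =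
      Submodule.Quotient.mk (h ⊗ₜ[R] (a • m)) := by
  rw [Submodule.Quotient.eq]
  have := (indRel R A K M).smul_mem h (Submodule.subset_span ⟨a, m, rfl⟩)
  simpa [smul_sub, TensorProduct.smul_tmul'] using this

variable (L K C M) in
/-- The component `L ⊗_{L ∩ ᶜK} ᶜM → H ⊗_K M` of the Mackey map. -/
def compToInd (Λ : A) : Comp R A L K Λ C M →ₗ[R] Ind R A K M :=
  (compRel R A L K Λ C M).liftQ (preCompToInd L K C M) <| by
    refine Submodule.span_le.2 ?_
    rintro _ (⟨a, b, hb, -, x, m, hbx, rfl⟩ | ⟨a, x, b, m, hxb, rfl⟩)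
    · rw [SetLike.mem_coe, LinearMap.mem_ker, map_sub, preCompToInd_lcmk, preCompToInd_lcmk,
        sub_eq_zero, mul_assoc]
    · rw [SetLike.mem_coe, LinearMap.mem_ker, map_sub, preCompToInd_lcmk, preCompToInd_lcmk,
        sub_eq_zero, ← mul_assoc, indMk_mul_tmul]

variable (L K C M) in
/-- The class of `l ⊗ x ⊗ m` in `L ⊗_{L ∩ ᶜK} ᶜM`. -/
def compMk (Λ : A) (a : L) (x : CKsub R A K C) (m : M) : Comp R A L K Λ C M :=
  Submodule.Quotient.mk (lcmk R A L K C M a (ckmk R A K M C x m))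

lemma compToInd_compMk (Λ : A) (a : L) (x : CKsub R A K C) (m : M) :
    compToInd L K C M Λ (compMk L K C M Λ a x m) =
      Submodule.Quotient.mk (((a : A) * (x : A)) ⊗ₜ[R] m) := rfl

variable (L K C M) in
/-- `compMk` as a bilinear map in the last two variables. -/
def compMkBilin (Λ : A) (a : L) : CKsub R A K C →ₗ[R] M →ₗ[R] Comp R A L K Λ C M :=
  (TensorProduct.mk R (CKsub R A K C) M).compr₂
    ((compRel R A L K Λ C M).mkQ ∘ₗ TensorProduct.mk R L (CKsub R A K C ⊗[R] M) a)

lemma compMk_mul {Λ : A} (a : L) {b : A} (hb : b ∈ L) (hbC : b ∈ conjK R A K Λ C)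
    (x : CKsub R A K C) (m : M) (hbx : b * (x : A) ∈ CKsub R A K C) :
    compMk L K C M Λ ⟨a * b, mul_mem a.2 hb⟩ x m = compMk L K C M Λ a ⟨b * x, hbx⟩ m :=
  (Submodule.Quotient.eq _).2 (Submodule.subset_span (Or.inl ⟨a, b, hb, hbC, x, m, hbx, rfl⟩))

lemma compMk_smul {Λ : A} (a : L) (x : CKsub R A K C) (b : K) (m : M)
    (hxb : (x : A) * b ∈ CKsub R A K C) :
    compMk L K C M Λ a ⟨x * b, hxb⟩ m = compMk L K C M Λ a x (b • m) :=
  (Submodule.Quotient.eq _).2 (Submodule.subset_span (Or.inr ⟨a, x, b, m, hxb, rfl⟩))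

lemma comp_hom_ext {G : Set A} (hG : IsGrouplikeSubgroup R A G) {Λ : A} {N : Type*}
    [AddCommGroup N] [Module R N]
    {f f' : Comp R A (Algebra.adjoin R G) K Λ C M →ₗ[R] N}
    (h : ∀ (g : A) (hg : g ∈ G) (x : CKsub R A K C) (m : M),
      f (compMk _ K C M Λ ⟨g, Algebra.subset_adjoin hg⟩ x m) =
        f' (compMk _ K C M Λ ⟨g, Algebra.subset_adjoin hg⟩ x m)) : f = f' := by
  refine Submodule.linearMap_qext _ ?_
  have key : ∀ φ φ' : Algebra.adjoin R G ⊗[R] (CKsub R A K C ⊗[R] M) →ₗ[R] N,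
      (∀ (g : A) (hg : g ∈ G) (x : CKsub R A K C) (m : M),
        φ (⟨g, Algebra.subset_adjoin hg⟩ ⊗ₜ (x ⊗ₜ m)) =
          φ' (⟨g, Algebra.subset_adjoin hg⟩ ⊗ₜ (x ⊗ₜ m))) → φ = φ' := by
    intro φ φ' hφ
    refine TensorProduct.ext (LinearMap.ext fun a => TensorProduct.ext' fun x m => ?_)
    obtain ⟨a, ha⟩ := a
    have ha' : a ∈ Submodule.span R G := hG.toSubmodule_adjoin ▸ ha
    have hadj : ∀ b ∈ Submodule.span R G, b ∈ Algebra.adjoin R G := fun b hb =>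
      (hG.toSubmodule_adjoin ▸ hb : b ∈ (Algebra.adjoin R G).toSubmodule)
    change φ (⟨a, hadj a ha'⟩ ⊗ₜ (x ⊗ₜ m)) = φ' (⟨a, hadj a ha'⟩ ⊗ₜ (x ⊗ₜ m))
    induction ha' using Submodule.span_induction with
    | mem g hg => exact hφ g hg x m
    | zero =>
      change φ ((0 : Algebra.adjoin R G) ⊗ₜ _) = φ' ((0 : Algebra.adjoin R G) ⊗ₜ _)
      rw [TensorProduct.zero_tmul, map_zero, map_zero]
    | add b c hb hc ihb ihc =>
      change φ (((⟨b, hadj b hb⟩ : Algebra.adjoin R G) + ⟨c, hadj c hc⟩) ⊗ₜ _) =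
        φ' (((⟨b, hadj b hb⟩ : Algebra.adjoin R G) + ⟨c, hadj c hc⟩) ⊗ₜ _)
      rw [TensorProduct.add_tmul, map_add, map_add, ihb (hadj b hb), ihc (hadj c hc)]
    | smul r b hb ihb =>
      change φ ((r • (⟨b, hadj b hb⟩ : Algebra.adjoin R G)) ⊗ₜ _) =
        φ' ((r • (⟨b, hadj b hb⟩ : Algebra.adjoin R G)) ⊗ₜ _)
      rw [← TensorProduct.smul_tmul', map_smul, map_smul, ihb (hadj b hb)]
  exact key _ _ h

end MackeyMap

section MackeyInverse

variable {R : Type} [Field R] [CharZero R] [IsAlgClosed R] {A : Type} [Ring A]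
  [HopfAlgebra R A] [FiniteDimensional R A] {l : A →ₗ[R] R}
  {K : Subalgebra R A} {G : Set A} {ι : Type} [DecidableEq ι] {rep : ι → Submodule R A}
variable (M : Type v) [AddCommGroup M] [Module R M] [Module K M]

/-- On each coset there is a bilinear map inverting the Mackey map. -/
lemma IsHaar.exists_coset_inverse (hl : IsHaar l) (hG : IsGrouplikeSubgroup R A G)
    (hK : IsHopfSubalgebra R A K) {Λ : A} (hΛ : IsIdempotentIntegral R A K Λ)
    (hrep : IsDoubleCosetReps R A (Algebra.adjoin R G) K rep) {W : Submodule R A}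
    (hW : IsCoset K W) :
    ∃ φ : W →ₗ[R] M →ₗ[R] ⨁ i, Comp R A (Algebra.adjoin R G) K Λ (rep i) M,
      ∀ (i : ι) (g : A) (hg : g ∈ G), W = Submodule.span R {g} * CKsub R A K (rep i) →
        ∀ (x : CKsub R A K (rep i)) (hx : g * (x : A) ∈ W) (m : M),
          φ ⟨g * x, hx⟩ m = DirectSum.lof R ι
            (fun i => Comp R A (Algebra.adjoin R G) K Λ (rep i) M) i
            (compMk _ K (rep i) M Λ ⟨g, Algebra.subset_adjoin hg⟩ x m) := by
  obtain ⟨i, h, hh, hWh⟩ := hl.exists_eq_span_singleton_mul hG hK hrep hW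
  obtain ⟨h', hh', h1, h2⟩ := hG.2.2.2 h hh
  have hmem : ∀ w ∈ W, LinearMap.mulLeft R h' w ∈ CKsub R A K (rep i) := by
    intro w hw
    rw [← span_singleton_mul_span_singleton_mul h2 (CKsub R A K (rep i)), ← hWh]
    exact Submodule.mul_mem_mul (Submodule.mem_span_singleton_self h') hw
  refine ⟨(compMkBilin _ K (rep i) M Λ ⟨h, Algebra.subset_adjoin hh⟩).compr₂
    (DirectSum.lof R ι (fun i => Comp R A (Algebra.adjoin R G) K Λ (rep i) M) i) ∘ₗ
      (LinearMap.mulLeft R h').restrict hmem, ?_⟩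
  intro j g hg hWg x hx m
  obtain rfl : i = j := by
    refine hrep.2.1 i j ?_
    rw [mul_assoc, mul_assoc]
    change _ * CKsub R A K (rep i) = _ * CKsub R A K (rep j)
    rw [← hG.adjoin_mul_span_singleton_mul hh, ← hWh, hWg, hG.adjoin_mul_span_singleton_mul hg]
  have hgG : h' * g ∈ G := hG.2.2.1 _ hh' _ hg
  have hfix : Submodule.span R {h' * g} * CKsub R A K (rep i) = CKsub R A K (rep i) := by
    rw [← Set.singleton_mul_singleton, ← Submodule.span_mul_span, mul_assoc, ← hWg, hWh,
      span_singleton_mul_span_singleton_mul h2]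
  have hcx : h' * g * (x : A) ∈ CKsub R A K (rep i) := by
    rw [mul_assoc]
    exact hmem _ hx
  have key := compMk_mul (M := M) ⟨h, Algebra.subset_adjoin hh⟩ (Algebra.subset_adjoin hgG)
    (hl.mem_conjK hG hK hΛ (hrep.1 i) hgG hfix) x m hcx
  have e1 : h * (h' * g) = g := by rw [← mul_assoc, h1, one_mul]
  simp only [e1, mul_assoc] at key
  rw [key]
  rfl

theorem IsHaar.mackeyAt [IsScalarTower R K M] [Module.Finite R M] (hl : IsHaar l) (hG : IsGrouplikeSubgroup R A G)
    (hK : IsHopfSubalgebra R A K) {Λ : A} (hΛ : IsIdempotentIntegral R A K Λ) :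
    MackeyAt R A (Algebra.adjoin R G) K Λ M := by
  classical
  intro ι _ rep hrep
  let π : (⨁ i, Comp R A (Algebra.adjoin R G) K Λ (rep i) M) →ₗ[R] Ind R A K M :=
    DirectSum.toModule R ι _ fun i => compToInd _ K (rep i) M Λ
  have hπ : ∀ i a x m, π (DirectSum.lof R ι
      (fun i => Comp R A (Algebra.adjoin R G) K Λ (rep i) M) i (compMk _ K (rep i) M Λ a x m)) =
        Submodule.Quotient.mk (((a : A) * (x : A)) ⊗ₜ[R] m) := fun i a x m => by
    rw [DirectSum.toModule_lof, compToInd_compMk]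
  have hcoset : ∀ W : {W // IsCoset (R := R) K W}, ∀ w ∈ W.1, ∃ i, ∃ g ∈ G,
      W.1 = Submodule.span R {g} * CKsub R A K (rep i) ∧
        ∃ x ∈ CKsub R A K (rep i), w = g * x := by
    intro W w hw
    obtain ⟨i, g, hg, hWg⟩ := hl.exists_eq_span_singleton_mul hG hK hrep W.2
    rw [hWg] at hw
    obtain ⟨x, hx, rfl⟩ := Submodule.mem_span_singleton_mul.1 hw
    exact ⟨i, g, hg, hWg, x, hx, rfl⟩
  have hinduct : ∀ X : Submodule R A, (∀ W, IsCoset (R := R) K W → W ≤ X) → ∀ a, a ∈ X :=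
    fun X hX a => by
      have : (⊤ : Submodule R A) ≤ X := hl.iSup_coset (K := K) ▸ iSup_le fun W => hX W.1 W.2
      exact this trivial
  refine ⟨π, ⟨?_, ?_⟩, fun i a x m => hπ i a x m⟩
  · choose φ hφ using fun W : {W // IsCoset (R := R) K W} =>
      hl.exists_coset_inverse M hG hK hΛ hrep W.2
    let e := LinearEquiv.ofBijective
      (DirectSum.coeLinearMap fun W : {W // IsCoset (R := R) K W} => W.1)
      (DirectSum.isInternal_submodule_of_iSupIndep_of_iSup_eq_top
        (hl.iSupIndep_coset hK) hl.iSup_coset)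
    let B : A →ₗ[R] M →ₗ[R] ⨁ i, Comp R A (Algebra.adjoin R G) K Λ (rep i) M :=
      DirectSum.toModule R {W // IsCoset (R := R) K W} _ φ ∘ₗ e.symm.toLinearMap
    have hB : ∀ (W : {W // IsCoset (R := R) K W}) (w : W.1), B w = φ W w := by
      intro W w
      have h1 : e.symm (w : A) = DirectSum.lof R _ (fun W : {W // IsCoset (R := R) K W} => W.1)
          W w := by
        rw [LinearEquiv.symm_apply_eq]
        exact (DirectSum.coeLinearMap_lof _ W w).symm
      simp only [B, LinearMap.comp_apply, LinearEquiv.coe_coe, h1, DirectSum.toModule_lof]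
    have hBg : ∀ i g (hg : g ∈ G) (x : CKsub R A K (rep i)) m, B (g * x) m =
        DirectSum.lof R ι (fun i => Comp R A (Algebra.adjoin R G) K Λ (rep i) M) i
          (compMk _ K (rep i) M Λ ⟨g, Algebra.subset_adjoin hg⟩ x m) := by
      intro i g hg x m
      have hx : g * (x : A) ∈ Submodule.span R {g} * CKsub R A K (rep i) :=
        Submodule.mul_mem_mul (Submodule.mem_span_singleton_self g) x.2
      rw [← hφ ⟨_, hG.isCoset hg (hrep.1 i)⟩ i g hg rfl x hx m]
      exact LinearMap.congr_fun (hB ⟨_, hG.isCoset hg (hrep.1 i)⟩ ⟨_, hx⟩) m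
    have hBK : ∀ (a : A) (b : K) (m : M), B (a * b) m = B a (b • m) := by
      intro a b m
      have := hinduct (LinearMap.ker (B.flip m ∘ₗ LinearMap.mulRight R (b : A) -
        B.flip (b • m))) ?_ a
      · rwa [LinearMap.mem_ker, LinearMap.sub_apply, sub_eq_zero] at this
      · intro W hW w hw
        obtain ⟨i, g, hg, -, x, hx, rfl⟩ := hcoset ⟨W, hW⟩ w hw
        rw [LinearMap.mem_ker, LinearMap.sub_apply, sub_eq_zero]
        change B (g * x * b) m = B (g * x) (b • m)
        have hxb := mul_mem_CKsub hx b.2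
        rw [mul_assoc, hBg i g hg ⟨x, hx⟩ (b • m), ← compMk_smul _ ⟨x, hx⟩ b m hxb]
        exact hBg i g hg ⟨x * b, hxb⟩ m
    have hrel : ∀ z ∈ indRel R A K M, ∀ a : A, TensorProduct.lift B (a • z) = 0 := by
      intro z hz
      induction hz using Submodule.span_induction with
      | mem z hz =>
        obtain ⟨b, m, rfl⟩ := hz
        intro a
        rw [smul_sub, map_sub, TensorProduct.smul_tmul', TensorProduct.smul_tmul',
          TensorProduct.lift.tmul, TensorProduct.lift.tmul, smul_eq_mul, smul_eq_mul, mul_one,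
          hBK, sub_self]
      | zero => exact fun a => by rw [smul_zero, map_zero]
      | add y z _ _ hy hz => exact fun a => by rw [smul_add, map_add, hy, hz, add_zero]
      | smul b z _ hz => exact fun a => by rw [smul_smul, hz]
    let ψ : Ind R A K M →ₗ[R] ⨁ i, Comp R A (Algebra.adjoin R G) K Λ (rep i) M :=
      ((indRel R A K M).restrictScalars R).liftQ (TensorProduct.lift B)
        (fun z hz => by simpa using hrel z hz 1) ∘ₗ
          (Submodule.Quotient.restrictScalarsEquiv R (indRel R A K M)).symm.toLinearMap
    have hψ : ∀ a m, ψ (Submodule.Quotient.mk (a ⊗ₜ[R] m)) = B a m := fun a m => rfl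
    have hid : ψ ∘ₗ π = LinearMap.id := by
      refine DirectSum.linearMap_ext R fun i => comp_hom_ext hG fun g hg x m => ?_
      simp only [LinearMap.comp_apply, LinearMap.id_apply, hπ, hψ]
      exact hBg i g hg x m
    exact Function.LeftInverse.injective (g := ψ) (LinearMap.congr_fun hid)
  · intro y
    obtain ⟨t, rfl⟩ := Submodule.Quotient.mk_surjective _ y
    rw [← LinearMap.mem_range]
    induction t with
    | zero => exact zero_mem _
    | add s t hs ht => exact add_mem hs ht
    | tmul a m =>
      refine hinduct ((LinearMap.range π).comap ((indRel R A K M).mkQ.restrictScalars R ∘ₗ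
        (TensorProduct.mk R A M).flip m)) (fun W hW w hw => ?_) a
      obtain ⟨i, g, hg, -, x, hx, rfl⟩ := hcoset ⟨W, hW⟩ w hw
      exact ⟨_, hπ i ⟨g, Algebra.subset_adjoin hg⟩ ⟨x, hx⟩ m⟩

end MackeyInverse

/-- Theorem 2: let `K` be a Hopf subalgebra of `H` and `G` a
subgroup of the group `G(H)` of grouplike elements of `H`.  For every simple
subcoalgebra `C` of `H` the intersection `kG ∩ ᶜK` is the group algebra
`kG_C` of the subgroup `G_C = {g ∈ G | g·CK = CK}` of `G`, and for every
finite-dimensional `K`-module `M` the left-multiplication map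
`⊕_{C ∈ kG\H/K} kG ⊗_{kG_C} ᶜM → M↑_K^H↓_{kG}^H` is an isomorphism of
`kG`-modules; that is, `(kG, K)` is a Mackey pair of Hopf subalgebras
of `H`. -/
theorem statement_0 (G : Set H) (hG : IsGrouplikeSubgroup k H G)
    (K : Subalgebra k H) (hK : IsHopfSubalgebra k H K)
    (Λ : H) (hΛ : IsIdempotentIntegral k H K Λ) :
    (∀ C : Submodule k H, IsSimpleSubcoalgebra k H C →
      (Algebra.adjoin k G).toSubmodule ⊓ conjK k H K Λ C =
        Submodule.span k {g : H | g ∈ G ∧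
          Submodule.span k {g} * CKsub k H K C = CKsub k H K C}) ∧
    IsMackeyPair.{v} k H (Algebra.adjoin k G) K Λ := by
  obtain ⟨l, hl⟩ := exists_isHaar (R := k) (A := H)
  refine ⟨fun C hC => hl.adjoin_inf_conjK hG hK hΛ hC, ?_⟩
  intro M _ _ _ _ _
  exact hl.mackeyAt M hG hK hΛ

end Statements

end

end MackeyPaper
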